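/- Let u ∈ BV(Ω) with Ω ⊂ ℝ^N open. If the characteristic function χ_{{u > t}} is a function of least gradient in Ω for almost every t ∈ ℝ, then u is a function of least gradient in Ω. -/

import Mathlib

open MeasureTheory Metric Set Bornology Filter
open scoped ENNReal NNReal RealInnerProductSpace Topology

noncomputable section

abbrev Euc (N : ℕ) := EuclideanSpace ℝ (Fin N)

def divg {N : ℕ} (z : Euc N → Euc N) (x : Euc N) : ℝ :=
  ∑ i : Fin N, fderiv ℝ z x (EuclideanSpace.single i 1) i

def polarFn {N : ℕ} (φ : Euc N → Euc N → ℝ) (x zs : Euc N) : ℝ :=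
  sSup {r : ℝ | ∃ ξ, φ x ξ ≤ 1 ∧ r = ⟪zs, ξ⟫}

def phiTV {N : ℕ} (φ : Euc N → Euc N → ℝ) (Ω : Set (Euc N)) (u : Euc N → ℝ) : ℝ≥0∞ :=
  ⨆ (z : Euc N → Euc N) (_ : ContDiff ℝ 1 z) (_ : HasCompactSupport z)
    (_ : tsupport z ⊆ Ω) (_ : ∀ x, polarFn φ x (z x) ≤ 1),
    ENNReal.ofReal (∫ x in Ω, u x * divg z x)

def TV {N : ℕ} (Ω : Set (Euc N)) (u : Euc N → ℝ) : ℝ≥0∞ :=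
  ⨆ (z : Euc N → Euc N) (_ : ContDiff ℝ 1 z) (_ : HasCompactSupport z)
    (_ : tsupport z ⊆ Ω) (_ : ∀ x, ‖z x‖ ≤ 1),
    ENNReal.ofReal (∫ x in Ω, u x * divg z x)

def MetricIntegrand {N : ℕ} (φ : Euc N → Euc N → ℝ) (Ω : Set (Euc N)) (lam Lam : ℝ) : Prop :=
  ContinuousOn (fun p : Euc N × Euc N => φ p.1 p.2) (closure Ω ×ˢ univ) ∧
  (∀ x ∈ closure Ω, ConvexOn ℝ univ (φ x)) ∧
  (∀ x ∈ closure Ω, ∀ (t : ℝ) (ξ : Euc N), φ x (t • ξ) = |t| * φ x ξ) ∧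
  0 < lam ∧ 0 < Lam ∧
  (∀ x ∈ closure Ω, ∀ ξ : Euc N, lam * ‖ξ‖ ≤ φ x ξ ∧ φ x ξ ≤ Lam * ‖ξ‖)

def HasLipschitzBoundary {N : ℕ} (Ω : Set (Euc N)) : Prop :=
  ∀ x ∈ frontier Ω, ∃ (ν : Euc N) (U : Set (Euc N)) (g : Euc N → ℝ) (L : ℝ≥0),
    ‖ν‖ = 1 ∧ IsOpen U ∧ x ∈ U ∧ LipschitzWith L g ∧
    ∀ y ∈ U, (y ∈ Ω ↔ g (y - ⟪y, ν⟫ • ν) < ⟪y, ν⟫)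

def IsTrace {N : ℕ} (Ω : Set (Euc N)) (u f : Euc N → ℝ) : Prop :=
  ∀ᵐ x ∂((μH[(N : ℝ) - 1] : Measure (Euc N)).restrict (frontier Ω)),
    Filter.Tendsto (fun r : ℝ => ⨍ y in ball x r ∩ Ω, |u y - f x| ∂volume)
      (𝓝[>] (0:ℝ)) (𝓝 0)

def IsLeastGradient {N : ℕ} (Ω : Set (Euc N)) (u : Euc N → ℝ) : Prop :=
  ∀ v : Euc N → ℝ, HasCompactSupport v → tsupport v ⊆ Ω → TV Ω u ≤ TV Ω (u + v)

def IsPhiLeastGradient {N : ℕ} (φ : Euc N → Euc N → ℝ) (Ω : Set (Euc N)) (u : Euc N → ℝ) : Prop :=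
  ∀ v : Euc N → ℝ, HasCompactSupport v → tsupport v ⊆ Ω → phiTV φ Ω u ≤ phiTV φ Ω (u + v)

def IsLeastGradientLoc {N : ℕ} (Ω : Set (Euc N)) (u : Euc N → ℝ) : Prop :=
  ∀ v : Euc N → ℝ, HasCompactSupport v → tsupport v ⊆ Ω →
    ∀ U : Set (Euc N), IsOpen U → Bornology.IsBounded U → tsupport v ⊆ U → U ⊆ Ω →
      TV U u ≤ TV U (u + v)

def Perim {N : ℕ} (E U : Set (Euc N)) : ℝ≥0∞ :=
  TV U (E.indicator (fun _ => (1:ℝ)))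

/-!
The coarea formula, used in both directions, turns the comparison of `u` with a competitor `g` that
agrees with `u` off a compact set into the comparison of their superlevel sets. The bound of the
total variation by the integral of the perimeters is the layer-cake formula; the reverse bound is
obtained by mollifying `g` and holds for integrable `g`.

A competitor `u + v` need not be integrable, nor even measurable, so that the Bochner integrals in
`TV Ω (u + v)` may be junk. Fields that are divergence-free on the support of `v` do not see `v`,
though: on them `z ↦ ∫ u div z` is bounded by `TV Ω (u + v)` times the sup norm of `z`, and the
Hahn–Banach theorem extends this functional to all fields with the same bound. The extension
differs from `z ↦ ∫ u div z` by a functional vanishing on fields that are divergence-free on the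
support of `v`. As the equation `div y = f` has a solution with `‖y‖_∞ ≤ C ‖f‖_q` for `q > N`
(average the primitives of `f` along rays), that functional is bounded by `‖div z‖_q`, hence of the
form `z ↦ ∫ w div z` with `w` integrable. Thus `g = u + w` is an integrable competitor whose total
variation is at most `TV Ω (u + v)`.
-/

open TopologicalSpace (Opens)
open scoped Distributions

section Trace

variable {E : Type*} [NormedAddCommGroup E] [NormedSpace ℝ E] [FiniteDimensional ℝ E]

variable (E) in
/-- The trace of endomorphisms of a finite-dimensional space as a continuous linear functional.
The divergence of a vector field is the trace of its derivative. -/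
def traceCLM : (E →L[ℝ] E) →L[ℝ] ℝ :=
  (LinearMap.trace ℝ E ∘ₗ ContinuousLinearMap.coeLM ℝ).toContinuousLinearMap

theorem traceCLM_smulRight (l : E →L[ℝ] ℝ) (y : E) : traceCLM E (l.smulRight y) = l y :=
  LinearMap.trace_smulRight (l : E →ₗ[ℝ] ℝ) y

end Trace

section Divergence

theorem integral_fderiv_eq_zero {E F : Type*} [NormedAddCommGroup E] [NormedSpace ℝ E]
    [FiniteDimensional ℝ E] [MeasurableSpace E] [BorelSpace E] {μ : Measure E}
    [μ.IsAddHaarMeasure] [NormedAddCommGroup F] [NormedSpace ℝ F] [CompleteSpace F] {g : E → F}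
    (hg : ContDiff ℝ 1 g) (hgc : HasCompactSupport g) : ∫ x, fderiv ℝ g x ∂μ = 0 := by
  have hint : Integrable (fderiv ℝ g) μ :=
    (hg.continuous_fderiv one_ne_zero).integrable_of_hasCompactSupport (hgc.fderiv ℝ)
  ext v
  rw [ContinuousLinearMap.integral_apply hint]
  simpa using integral_bilinear_fderiv_right_eq_neg_left_of_integrable (μ := μ) (v := v)
    (f := fun _ => (1 : ℝ)) (g := g) (B := ContinuousLinearMap.lsmul ℝ ℝ) (by simp)
    (by simpa using hint.apply_continuousLinearMap v)
    (by simpa using hg.continuous.integrable_of_hasCompactSupport hgc)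
    (fun _ _ => differentiableAt_const _) (fun x _ => hg.differentiable one_ne_zero x)

variable {N : ℕ} {z w : Euc N → Euc N} {f : Euc N → ℝ} {x : Euc N}

theorem divg_eq_traceCLM (z : Euc N → Euc N) (x : Euc N) :
    divg z x = traceCLM (Euc N) (fderiv ℝ z x) := by
  change _ = LinearMap.trace ℝ (Euc N) (fderiv ℝ z x : Euc N →ₗ[ℝ] Euc N)
  rw [LinearMap.trace_eq_sum_inner _ (EuclideanSpace.basisFun (Fin N) ℝ)]
  simp [divg, EuclideanSpace.inner_single_left]

theorem divg_add (hz : DifferentiableAt ℝ z x) (hw : DifferentiableAt ℝ w x) :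
    divg (z + w) x = divg z x + divg w x := by
  simp only [divg_eq_traceCLM, fderiv_add hz hw, map_add]

theorem divg_const_smul (c : ℝ) (hz : DifferentiableAt ℝ z x) :
    divg (c • z) x = c * divg z x := by
  simp only [divg_eq_traceCLM, fderiv_const_smul hz, map_smul, smul_eq_mul]

theorem divg_fun_smul (hf : DifferentiableAt ℝ f x) (hz : DifferentiableAt ℝ z x) :
    divg (fun y => f y • z y) x = f x * divg z x + fderiv ℝ f x (z x) := by
  simp only [divg_eq_traceCLM, fderiv_fun_smul hf hz, map_add, map_smul, smul_eq_mul,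
    traceCLM_smulRight]

theorem divg_of_notMem_tsupport (hx : x ∉ tsupport z) : divg z x = 0 := by
  rw [divg_eq_traceCLM, fderiv_of_notMem_tsupport ℝ hx, map_zero]

theorem support_divg_subset (z : Euc N → Euc N) : Function.support (divg z) ⊆ tsupport z :=
  fun _ hx => by_contra fun h => hx (divg_of_notMem_tsupport h)

theorem contDiff_divg {m n : WithTop ℕ∞} (hz : ContDiff ℝ n z) (hmn : m + 1 ≤ n) :
    ContDiff ℝ m (divg z) := by
  simpa only [← divg_eq_traceCLM] using
    (traceCLM (Euc N)).contDiff.fun_comp (hz.fderiv_right hmn)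

theorem continuous_divg (hz : ContDiff ℝ 1 z) : Continuous (divg z) :=
  (contDiff_divg (m := 0) hz (by norm_num)).continuous

theorem hasCompactSupport_divg (hz : HasCompactSupport z) : HasCompactSupport (divg z) :=
  hz.mono' (support_divg_subset z)

theorem integral_divg (hz : ContDiff ℝ 1 z) (hzc : HasCompactSupport z) : ∫ x, divg z x = 0 := by
  simp only [divg_eq_traceCLM]
  rw [ContinuousLinearMap.integral_comp_comm _
    ((hz.continuous_fderiv one_ne_zero).integrable_of_hasCompactSupport (hzc.fderiv ℝ)),
    integral_fderiv_eq_zero hz hzc, map_zero]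

theorem integral_mul_divg (hf : ContDiff ℝ 1 f) (hz : ContDiff ℝ 1 z)
    (hzc : HasCompactSupport z) :
    ∫ x, f x * divg z x = -∫ x, fderiv ℝ f x (z x) := by
  have hfz : Integrable fun x => f x * divg z x :=
    (hf.continuous.mul (continuous_divg hz)).integrable_of_hasCompactSupport
      (hasCompactSupport_divg hzc).mul_left
  have hdf : Integrable fun x => fderiv ℝ f x (z x) :=
    ((hf.continuous_fderiv one_ne_zero).clm_apply hz.continuous).integrable_of_hasCompactSupport
      (hzc.mono fun x hx hzx => hx (by simp [hzx]))
  have hsum : ∫ x, (f x * divg z x + fderiv ℝ f x (z x)) = 0 := by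
    rw [← integral_divg (hf.smul hz) hzc.smul_left]
    congr with x
    exact (divg_fun_smul (hf.differentiable one_ne_zero x) (hz.differentiable one_ne_zero x)).symm
  rw [integral_add hfz hdf] at hsum
  linarith

theorem setIntegral_mul_divg {Ω : Set (Euc N)} (hz : tsupport z ⊆ Ω) (u : Euc N → ℝ) :
    ∫ x in Ω, u x * divg z x = ∫ x, u x * divg z x :=
  setIntegral_eq_integral_of_forall_compl_eq_zero fun x hx => by
    rw [divg_of_notMem_tsupport fun h => hx (hz h), mul_zero]

end Divergence

section LpDual

variable {α : Type*} [MeasurableSpace α] {μ : Measure α} {q : ℝ≥0∞}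

theorem integrable_mul_simpleFunc {w : α → ℝ} (hw : Integrable w μ) (g : SimpleFunc α ℝ) :
    Integrable (fun x => w x * g x) μ := by
  obtain ⟨c, hc⟩ := g.exists_forall_norm_le
  exact hw.mul_bdd g.measurable.aestronglyMeasurable (ae_of_all _ hc)

variable [IsFiniteMeasure μ]

theorem sum_indicatorConstLp_biUnion {ι E : Type*} [NormedAddCommGroup E] {A : ι → Set α}
    (hA : ∀ i, MeasurableSet (A i)) (hd : Pairwise (Function.onFun Disjoint A)) (s : Finset ι)
    (c : E) :
    ∑ i ∈ s, indicatorConstLp q (hA i) (measure_ne_top μ _) c =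
      indicatorConstLp q (s.measurableSet_biUnion fun i _ => hA i) (measure_ne_top μ _) c := by
  classical
  induction s using Finset.induction_on with
  | empty => simp
  | insert a s ha ih =>
    have hdisj : Disjoint (A a) (⋃ i ∈ s, A i) :=
      disjoint_iUnion₂_right.2 fun i hi => hd fun h => ha (h ▸ hi)
    rw [Finset.sum_insert ha, ih, ← indicatorConstLp_disjoint_union (hA a) _ _ _ hdisj]
    simp only [Finset.set_biUnion_insert]

theorem tendsto_measure_iUnion_sdiff_biUnion {ι : Type*} [Countable ι] {A : ι → Set α}
    (hA : ∀ i, MeasurableSet (A i)) :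
    Tendsto (fun s : Finset ι => μ ((⋃ i, A i) \ ⋃ i ∈ s, A i)) atTop (𝓝 0) := by
  have hempty : ⋂ s : Finset ι, ((⋃ i, A i) \ ⋃ i ∈ s, A i) = ∅ := by
    refine eq_empty_of_forall_notMem fun x hx => ?_
    obtain ⟨i, hi⟩ := mem_iUnion.1 (mem_iInter.1 hx ∅).1
    exact (mem_iInter.1 hx {i}).2 (by simpa using hi)
  rw [← measure_empty (μ := μ), ← hempty]
  exact tendsto_measure_iInter_atTop
    (fun s => ((MeasurableSet.iUnion hA).diff
      (s.measurableSet_biUnion fun i _ => hA i)).nullMeasurableSet)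
    (fun s t hst => sdiff_subset_sdiff_right (biUnion_subset_biUnion_left hst))
    ⟨∅, measure_ne_top _ _⟩

variable [Fact (1 ≤ q)]

theorem hasSum_indicatorConstLp_iUnion {ι E : Type*} [Countable ι] [NormedAddCommGroup E]
    (hq : q ≠ ∞) {A : ι → Set α} (hA : ∀ i, MeasurableSet (A i))
    (hd : Pairwise (Function.onFun Disjoint A)) (c : E) :
    HasSum (fun i => indicatorConstLp q (hA i) (measure_ne_top μ _) c)
      (indicatorConstLp q (MeasurableSet.iUnion hA) (measure_ne_top μ _) c) := by
  simp only [HasSum, SummationFilter.unconditional_filter, sum_indicatorConstLp_biUnion hA hd]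
  refine tendsto_indicatorConstLp_set hq ?_
  convert tendsto_measure_iUnion_sdiff_biUnion (μ := μ) hA using 3 with s
  rw [Set.symmDiff_def, sdiff_eq_empty.2 (iUnion₂_subset fun i _ => subset_iUnion A i),
    empty_union]

open Classical in
/-- The signed measure `A ↦ l 1_A` attached to a continuous functional `l` on `L^q`. -/
def dualSignedMeasure (hq : q ≠ ∞) (l : Lp ℝ q μ →L[ℝ] ℝ) : SignedMeasure α where
  measureOf' A :=
    if hA : MeasurableSet A then l (indicatorConstLp q hA (measure_ne_top μ A) 1) else 0
  empty' := by simp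
  not_measurable' A hA := dif_neg hA
  m_iUnion' A hA hd := by
    simp only [hA, MeasurableSet.iUnion hA, dif_pos]
    exact l.hasSum (hasSum_indicatorConstLp_iUnion hq hA hd 1)

theorem dualSignedMeasure_apply (hq : q ≠ ∞) (l : Lp ℝ q μ →L[ℝ] ℝ) {A : Set α}
    (hA : MeasurableSet A) :
    dualSignedMeasure hq l A = l (indicatorConstLp q hA (measure_ne_top μ A) 1) :=
  dif_pos hA

theorem dualSignedMeasure_absolutelyContinuous (hq : q ≠ ∞) (l : Lp ℝ q μ →L[ℝ] ℝ) :
    dualSignedMeasure hq l ≪ᵥ μ.toENNRealVectorMeasure := by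
  refine VectorMeasure.AbsolutelyContinuous.mk fun A hA hμA => ?_
  rw [Measure.toENNRealVectorMeasure_apply_measurable hA] at hμA
  rw [dualSignedMeasure_apply hq l hA, ← norm_eq_zero]
  have hzero : indicatorConstLp q hA (measure_ne_top μ A) (1 : ℝ) = 0 := by
    rw [Lp.eq_zero_iff_ae_eq_zero]
    exact indicatorConstLp_coeFn.trans (indicator_meas_zero hμA)
  simp [hzero]

theorem exists_integrable_dual_indicator_eq (hq : q ≠ ∞) (l : Lp ℝ q μ →L[ℝ] ℝ) :
    ∃ w : α → ℝ, Integrable w μ ∧ ∀ (A : Set α) (hA : MeasurableSet A),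
      l (indicatorConstLp q hA (measure_ne_top μ A) 1) = ∫ x in A, w x ∂μ := by
  let s := dualSignedMeasure hq l
  have hs : Integrable (s.rnDeriv μ) μ := SignedMeasure.integrable_rnDeriv s μ
  refine ⟨s.rnDeriv μ, hs, fun A hA => ?_⟩
  rw [← dualSignedMeasure_apply hq l hA, ← withDensityᵥ_apply hs hA,
    SignedMeasure.withDensityᵥ_rnDeriv_eq s μ (dualSignedMeasure_absolutelyContinuous hq l)]

theorem dual_simpleFunc_eq_integral {l : Lp ℝ q μ →L[ℝ] ℝ} {w : α → ℝ} (hw : Integrable w μ)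
    (hl : ∀ (A : Set α) (hA : MeasurableSet A),
      l (indicatorConstLp q hA (measure_ne_top μ A) 1) = ∫ x in A, w x ∂μ)
    (g : SimpleFunc α ℝ) (hg : MemLp g q μ) : l (hg.toLp g) = ∫ x, w x * g x ∂μ := by
  induction g using SimpleFunc.induction with
  | @const c A hA =>
    have hconst : hg.toLp _ = c • indicatorConstLp q hA (measure_ne_top μ A) (1 : ℝ) := by
      rw [indicatorConstLp, ← MemLp.toLp_const_smul]
      refine MemLp.toLp_congr _ _ (ae_of_all _ fun x => ?_)
      by_cases hx : x ∈ A <;> simp [hx]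
    rw [hconst, map_smul, hl, ← integral_indicator hA, smul_eq_mul, ← integral_const_mul]
    refine integral_congr_ae (ae_of_all _ fun x => ?_)
    by_cases hx : x ∈ A <;> simp [hx, mul_comm c]
  | @add f g _ ihf ihg =>
    have hfq : MemLp f q μ := f.memLp_of_isFiniteMeasure q μ
    have hgq : MemLp g q μ := g.memLp_of_isFiniteMeasure q μ
    calc l (MemLp.toLp _ _) = l (hfq.toLp f) + l (hgq.toLp g) := by
          rw [← map_add, ← MemLp.toLp_add]; rfl
      _ = ∫ x, w x * f x ∂μ + ∫ x, w x * g x ∂μ := by rw [ihf, ihg]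
      _ = ∫ x, w x * (f + g) x ∂μ := by
          rw [← integral_add (integrable_mul_simpleFunc hw f) (integrable_mul_simpleFunc hw g)]
          simp only [SimpleFunc.add_apply, mul_add]

theorem exists_integrable_dual_eq_integral (hq : q ≠ ∞) (l : Lp ℝ q μ →L[ℝ] ℝ) :
    ∃ w : α → ℝ, Integrable w μ ∧ ∀ (f : α → ℝ) (hf : MemLp f q μ), Measurable f →
      (∃ c, ∀ x, ‖f x‖ ≤ c) → l (hf.toLp f) = ∫ x, w x * f x ∂μ := by
  obtain ⟨w, hw, hl⟩ := exists_integrable_dual_indicator_eq hq l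
  refine ⟨w, hw, fun f hf hfm ⟨c, hc⟩ => ?_⟩
  let g : ℕ → SimpleFunc α ℝ := SimpleFunc.approxOn f hfm univ 0 (mem_univ _)
  have hg (n : ℕ) : MemLp (g n) q μ := (g n).memLp_of_isFiniteMeasure q μ
  have hgf : Tendsto (fun n => (hg n).toLp (g n)) atTop (𝓝 (hf.toLp f)) := by
    rw [Lp.tendsto_Lp_iff_tendsto_eLpNorm'']
    exact SimpleFunc.tendsto_approxOn_Lp_eLpNorm hfm (mem_univ _) hq (by simp)
      (by simpa using hf.2)
  have hint : Tendsto (fun n => ∫ x, w x * g n x ∂μ) atTop (𝓝 (∫ x, w x * f x ∂μ)) := by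
    refine tendsto_integral_of_dominated_convergence (fun x => ‖w x‖ * (c + c))
      (fun n => (integrable_mul_simpleFunc hw (g n)).1) (hw.norm.mul_const _)
      (fun n => ae_of_all _ fun x => ?_) (ae_of_all _ fun x => ?_)
    · rw [norm_mul]
      gcongr
      exact (SimpleFunc.norm_approxOn_zero_le hfm (mem_univ _) x n).trans
        (add_le_add (hc x) (hc x))
    · exact (SimpleFunc.tendsto_approxOn hfm (mem_univ _) (by simp)).const_mul _
  refine tendsto_nhds_unique ((l.continuous.tendsto _).comp hgf) (hint.congr fun n => ?_)
  exact (dual_simpleFunc_eq_integral hw hl (g n) (hg n)).symm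

end LpDual

section RayAverage

variable {E : Type*} [NormedAddCommGroup E] [NormedSpace ℝ E] {f : E → ℝ}

theorem setIntegral_fderiv_sub_smul (hf : ContDiff ℝ 1 f) (x y : E) :
    ∫ s in Ioc (0 : ℝ) 1, fderiv ℝ f (x - s • y) y = f x - f (x - y) := by
  have hderiv (s : ℝ) : HasDerivAt (fun s : ℝ => -f (x - s • y)) (fderiv ℝ f (x - s • y) y) s := by
    have hline : HasDerivAt (fun s : ℝ => x - s • y) (-y) s := by
      simpa using ((hasDerivAt_id s).smul_const y).const_sub x
    simpa [Function.comp_def] using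
      ((hf.differentiable one_ne_zero (x - s • y)).hasFDerivAt.comp_hasDerivAt s hline).fun_neg
  have hcont : Continuous fun s : ℝ => fderiv ℝ f (x - s • y) y :=
    ((hf.continuous_fderiv one_ne_zero).comp (by fun_prop)).clm_apply continuous_const
  rw [← intervalIntegral.integral_of_le zero_le_one,
    intervalIntegral.integral_eq_sub_of_hasDerivAt (fun s _ => hderiv s)
      (hcont.intervalIntegrable _ _)]
  simp [neg_add_eq_sub]

theorem continuous_fderiv_comp_sub_smulRight (hf : ContDiff ℝ 1 f) :
    Continuous fun q : E × E × ℝ => (fderiv ℝ f (q.1 - q.2.2 • q.2.1)).smulRight q.2.1 :=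
  (ContinuousLinearMap.smulRightL ℝ E E).continuous₂.comp
    (((hf.continuous_fderiv one_ne_zero).comp (by fun_prop)).prodMk (by fun_prop))

variable [MeasurableSpace E] {ν : Measure E} {M : ℝ}

/-- The superposition `∫ ∫₀¹ f (x - s • y) • y ds dν(y)` of the fields that spread `f` along the
segments with direction `y`. Its divergence at `x` is the mean of `f x - f (x - y)`, so for a
probability measure `ν` carried by vectors that leave the support of `f` it is a primitive of `f`
with respect to the divergence. -/
def rayAverage (ν : Measure E) (f : E → ℝ) (x : E) : E :=
  ∫ p, f (x - p.2 • p.1) • p.1 ∂ν.prod (volume.restrict (Ioc (0 : ℝ) 1))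

theorem exists_norm_fderiv_comp_sub_smulRight_le [SFinite ν] (hf : ContDiff ℝ 1 f)
    (hfc : HasCompactSupport f) (hν : ∀ᵐ y ∂ν, ‖y‖ ≤ M) :
    ∃ A, ∀ᵐ p ∂ν.prod (volume.restrict (Ioc (0 : ℝ) 1)), ∀ x,
      ‖(fderiv ℝ f (x - p.2 • p.1)).smulRight p.1‖ ≤ A := by
  obtain ⟨A, hA⟩ := (hf.continuous_fderiv one_ne_zero).bounded_above_of_compact_support
    (hfc.fderiv ℝ)
  refine ⟨A * M, ?_⟩
  filter_upwards [Measure.quasiMeasurePreserving_fst.ae hν] with p hp x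
  rw [ContinuousLinearMap.norm_smulRight_apply]
  exact mul_le_mul (hA _) hp (norm_nonneg _) ((norm_nonneg _).trans (hA 0))

variable [BorelSpace E]

theorem enorm_rayAverage_le [SFinite ν] (hf : Continuous f) (hν : ∀ᵐ y ∂ν, ‖y‖ ≤ M) (x : E) :
    ‖rayAverage ν f x‖ₑ ≤
      ENNReal.ofReal M * ∫⁻ s in Ioc (0 : ℝ) 1, ∫⁻ y, ‖f (x - s • y)‖ₑ ∂ν := by
  have hmeas : Measurable fun p : E × ℝ => ‖f (x - p.2 • p.1)‖ₑ :=
    (hf.comp (by fun_prop : Continuous fun p : E × ℝ => x - p.2 • p.1)).enorm.measurable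
  calc ‖rayAverage ν f x‖ₑ
      ≤ ∫⁻ p, ‖f (x - p.2 • p.1) • p.1‖ₑ ∂ν.prod (volume.restrict (Ioc (0 : ℝ) 1)) :=
        enorm_integral_le_lintegral_enorm _
    _ ≤ ∫⁻ p, ENNReal.ofReal M * ‖f (x - p.2 • p.1)‖ₑ
          ∂ν.prod (volume.restrict (Ioc (0 : ℝ) 1)) := by
        refine lintegral_mono_ae ?_
        filter_upwards [Measure.quasiMeasurePreserving_fst.ae hν] with p hp
        rw [enorm_smul, mul_comm, ← ofReal_norm p.1]
        gcongr
    _ = _ := by rw [lintegral_const_mul _ hmeas, lintegral_prod_symm _ hmeas.aemeasurable]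

variable [FiniteDimensional ℝ E]

theorem eLpNorm_comp_sub_smul {F : Type*} [NormedAddCommGroup F]
    (μ : Measure E) [μ.IsAddHaarMeasure] (f : E → F) (p : ℝ≥0∞) (x : E) {s : ℝ} (hs : 0 < s) :
    eLpNorm (fun y => f (x - s • y)) p μ =
      ENNReal.ofReal (s ^ (-(Module.finrank ℝ E / p.toReal))) * eLpNorm f p μ := by
  let e : E ≃ₜ E := (Homeomorph.smulOfNeZero s hs.ne').trans (Homeomorph.subLeft x)
  have hmap : μ.map e = ENNReal.ofReal ((s ^ Module.finrank ℝ E)⁻¹) • μ := by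
    have hcomp : (e : E → E) = (fun y => x - y) ∘ (fun y => s • y) := rfl
    rw [hcomp, ← Measure.map_map (by fun_prop) (by fun_prop), Measure.map_addHaar_smul μ hs.ne',
      Measure.map_smul, (μ.measurePreserving_sub_left x).map_eq, abs_of_pos (by positivity)]
  have hscale : ENNReal.ofReal ((s ^ Module.finrank ℝ E)⁻¹) ≠ 0 := by
    rw [ENNReal.ofReal_ne_zero_iff]
    positivity
  calc eLpNorm (f ∘ e) p μ
      = ENNReal.ofReal ((s ^ Module.finrank ℝ E)⁻¹) ^ (1 / p).toReal * eLpNorm f p μ := by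
        rw [← e.measurableEmbedding.eLpNorm_map_measure, hmap,
          eLpNorm_smul_measure_of_ne_zero hscale, smul_eq_mul]
    _ = _ := by
        rw [ENNReal.ofReal_rpow_of_pos (by positivity), ← Real.rpow_natCast, ← Real.rpow_neg hs.le,
          ← Real.rpow_mul hs.le, one_div, ENNReal.toReal_inv, neg_mul, div_eq_mul_inv]

theorem lintegral_enorm_comp_sub_smul_le [IsProbabilityMeasure ν] {μ : Measure E}
    [μ.IsAddHaarMeasure] {C p : ℝ≥0∞} (hνμ : ν ≤ C • μ) (hp : 1 ≤ p) (hp' : p ≠ ∞)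
    (hf : Continuous f) (x : E) {s : ℝ} (hs : 0 < s) :
    ∫⁻ y, ‖f (x - s • y)‖ₑ ∂ν ≤
      C ^ (1 / p).toReal *
        (ENNReal.ofReal (s ^ (-(Module.finrank ℝ E / p.toReal))) * eLpNorm f p μ) := by
  have hcont : Continuous fun y => f (x - s • y) := hf.comp (by fun_prop)
  calc ∫⁻ y, ‖f (x - s • y)‖ₑ ∂ν = eLpNorm (fun y => f (x - s • y)) 1 ν :=
        eLpNorm_one_eq_lintegral_enorm.symm
    _ ≤ eLpNorm (fun y => f (x - s • y)) p ν :=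
        eLpNorm_le_eLpNorm_of_exponent_le hp hcont.aestronglyMeasurable
    _ ≤ eLpNorm (fun y => f (x - s • y)) p (C • μ) := eLpNorm_mono_measure _ hνμ
    _ = _ := by
        rw [eLpNorm_smul_measure_of_ne_top hp', smul_eq_mul, eLpNorm_comp_sub_smul μ f p x hs]

theorem lintegral_rpow_neg_lt_top {a : ℝ} (ha : a < 1) :
    ∫⁻ s in Ioc (0 : ℝ) 1, ENNReal.ofReal (s ^ (-a)) < ∞ := by
  have hint : IntervalIntegrable (fun s : ℝ => s ^ (-a)) volume 0 1 :=
    intervalIntegral.intervalIntegrable_rpow' (by linarith)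
  exact hint.1.lintegral_lt_top

theorem exists_enorm_rayAverage_le [IsProbabilityMeasure ν] {μ : Measure E}
    [μ.IsAddHaarMeasure] {C p : ℝ≥0∞} (hC : C ≠ ∞) (hνμ : ν ≤ C • μ)
    (hν : ∀ᵐ y ∂ν, ‖y‖ ≤ M) (hp : 1 ≤ p) (hp' : p ≠ ∞) (hEp : Module.finrank ℝ E < p) :
    ∃ D : ℝ≥0, ∀ f : E → ℝ, Continuous f → ∀ x, ‖rayAverage ν f x‖ₑ ≤ D * eLpNorm f p μ := by
  have hpow : Module.finrank ℝ E / p.toReal < 1 := by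
    have hlt : (Module.finrank ℝ E : ℝ) < p.toReal := by
      simpa using ENNReal.toReal_strict_mono hp' hEp
    exact (div_lt_one ((Nat.cast_nonneg _).trans_lt hlt)).2 hlt
  set I : ℝ≥0∞ :=
    ∫⁻ s in Ioc (0 : ℝ) 1, ENNReal.ofReal (s ^ (-(Module.finrank ℝ E / p.toReal))) with hI
  have htop : ENNReal.ofReal M * (C ^ (1 / p).toReal * I) ≠ ∞ :=
    ENNReal.mul_ne_top ENNReal.ofReal_ne_top (ENNReal.mul_ne_top
      (ENNReal.rpow_ne_top_of_nonneg ENNReal.toReal_nonneg hC) (lintegral_rpow_neg_lt_top hpow).ne)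
  refine ⟨(ENNReal.ofReal M * (C ^ (1 / p).toReal * I)).toNNReal, fun f hf x => ?_⟩
  rw [ENNReal.coe_toNNReal htop]
  calc ‖rayAverage ν f x‖ₑ
      ≤ ENNReal.ofReal M * ∫⁻ s in Ioc (0 : ℝ) 1, ∫⁻ y, ‖f (x - s • y)‖ₑ ∂ν :=
        enorm_rayAverage_le hf hν x
    _ ≤ ENNReal.ofReal M * ∫⁻ s in Ioc (0 : ℝ) 1, C ^ (1 / p).toReal *
          (ENNReal.ofReal (s ^ (-(Module.finrank ℝ E / p.toReal))) * eLpNorm f p μ) := by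
        gcongr 1
        exact setLIntegral_mono_ae' measurableSet_Ioc (ae_of_all _ fun s hs =>
          lintegral_enorm_comp_sub_smul_le hνμ hp hp' hf x hs.1)
    _ = _ := by
        rw [lintegral_const_mul _ (by fun_prop), lintegral_mul_const _ (by fun_prop), ← hI]
        ring

theorem integrable_fderiv_comp_sub_smulRight [IsFiniteMeasure ν] (hf : ContDiff ℝ 1 f)
    (hfc : HasCompactSupport f) (hν : ∀ᵐ y ∂ν, ‖y‖ ≤ M) (x : E) :
    Integrable (fun p : E × ℝ => (fderiv ℝ f (x - p.2 • p.1)).smulRight p.1)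
      (ν.prod (volume.restrict (Ioc (0 : ℝ) 1))) := by
  obtain ⟨A, hA⟩ := exists_norm_fderiv_comp_sub_smulRight_le hf hfc hν
  exact .of_bound (((continuous_fderiv_comp_sub_smulRight hf).comp
    (.prodMk_right x)).aestronglyMeasurable) A (hA.mono fun p hp => hp x)

theorem integrable_comp_sub_smul_smul [IsFiniteMeasure ν] (hf : Continuous f)
    (hfc : HasCompactSupport f) (hν : ∀ᵐ y ∂ν, ‖y‖ ≤ M) (x : E) :
    Integrable (fun p : E × ℝ => f (x - p.2 • p.1) • p.1)
      (ν.prod (volume.restrict (Ioc (0 : ℝ) 1))) := by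
  obtain ⟨A, hA⟩ := hf.bounded_above_of_compact_support hfc
  refine .of_bound (by fun_prop : Continuous _).aestronglyMeasurable (A * M) ?_
  filter_upwards [Measure.quasiMeasurePreserving_fst.ae hν] with p hp
  rw [norm_smul]
  exact mul_le_mul (hA _) hp (norm_nonneg _) ((norm_nonneg _).trans (hA 0))

theorem hasFDerivAt_rayAverage [IsFiniteMeasure ν] (hf : ContDiff ℝ 1 f)
    (hfc : HasCompactSupport f) (hν : ∀ᵐ y ∂ν, ‖y‖ ≤ M) (x : E) :
    HasFDerivAt (rayAverage ν f)
      (∫ p, (fderiv ℝ f (x - p.2 • p.1)).smulRight p.1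
        ∂ν.prod (volume.restrict (Ioc (0 : ℝ) 1))) x := by
  obtain ⟨A, hA⟩ := exists_norm_fderiv_comp_sub_smulRight_le hf hfc hν
  refine hasFDerivAt_integral_of_dominated_of_fderiv_le (bound := fun _ => A) univ_mem
    (.of_forall fun x => (integrable_comp_sub_smul_smul hf.continuous hfc hν x).1)
    (integrable_comp_sub_smul_smul hf.continuous hfc hν x)
    (integrable_fderiv_comp_sub_smulRight hf hfc hν x).1
    (hA.mono fun p hp x _ => hp x) (integrable_const _) (ae_of_all _ fun p x _ => ?_)
  have hcomp : HasFDerivAt (fun x => f (x - p.2 • p.1)) (fderiv ℝ f (x - p.2 • p.1)) x := by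
    simpa [Function.comp_def] using (hf.differentiable one_ne_zero _).hasFDerivAt.comp x
      ((hasFDerivAt_id x).sub_const (p.2 • p.1))
  exact hcomp.smul_const p.1

theorem contDiff_rayAverage [IsFiniteMeasure ν] (hf : ContDiff ℝ 1 f)
    (hfc : HasCompactSupport f) (hν : ∀ᵐ y ∂ν, ‖y‖ ≤ M) : ContDiff ℝ 1 (rayAverage ν f) := by
  obtain ⟨A, hA⟩ := exists_norm_fderiv_comp_sub_smulRight_le hf hfc hν
  have hderiv := hasFDerivAt_rayAverage hf hfc hν
  rw [contDiff_one_iff_fderiv]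
  refine ⟨fun x => (hderiv x).differentiableAt, ?_⟩
  rw [funext fun x => (hderiv x).fderiv]
  exact continuous_of_dominated (bound := fun _ => A)
    (fun x => (integrable_fderiv_comp_sub_smulRight hf hfc hν x).1)
    (fun x => hA.mono fun p hp => hp x) (integrable_const _)
    (ae_of_all _ fun p => (continuous_fderiv_comp_sub_smulRight hf).comp (.prodMk_left p))

end RayAverage

section DivgPrimitive

variable {N : ℕ}

theorem divg_rayAverage {ν : Measure (Euc N)} [IsProbabilityMeasure ν] {f : Euc N → ℝ} {M : ℝ}
    (hf : ContDiff ℝ 1 f) (hfc : HasCompactSupport f) (hν : ∀ᵐ y ∂ν, ‖y‖ ≤ M) {x : Euc N}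
    (hx : ∀ᵐ y ∂ν, f (x - y) = 0) : divg (rayAverage ν f) x = f x := by
  have hint := integrable_fderiv_comp_sub_smulRight hf hfc hν x
  have htrace := (traceCLM (Euc N)).integrable_comp hint
  simp only [traceCLM_smulRight] at htrace
  calc divg (rayAverage ν f) x
      = ∫ p, fderiv ℝ f (x - p.2 • p.1) p.1 ∂ν.prod (volume.restrict (Ioc (0 : ℝ) 1)) := by
        rw [divg_eq_traceCLM, (hasFDerivAt_rayAverage hf hfc hν x).fderiv,
          ← ContinuousLinearMap.integral_comp_comm _ hint]
        simp only [traceCLM_smulRight]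
    _ = ∫ y, (f x - f (x - y)) ∂ν := by
        rw [integral_prod _ htrace]
        simp only [setIntegral_fderiv_sub_smul hf]
    _ = ∫ _, f x ∂ν := integral_congr_ae (hx.mono fun y hy => by simp [hy])
    _ = f x := by simp

theorem exists_isProbabilityMeasure_sub_notMem {E : Type*} [NormedAddCommGroup E]
    [NormedSpace ℝ E] [Nontrivial E] [MeasurableSpace E] [BorelSpace E] [FiniteDimensional ℝ E]
    (μ : Measure E) [μ.IsAddHaarMeasure] {K : Set E} (hK : IsBounded K) :
    ∃ ν : Measure E, IsProbabilityMeasure ν ∧ (∃ C ≠ ∞, ν ≤ C • μ) ∧ (∃ M, ∀ᵐ y ∂ν, ‖y‖ ≤ M) ∧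
      ∀ x ∈ K, ∀ᵐ y ∂ν, x - y ∉ K := by
  obtain ⟨R, hR, hKR⟩ := hK.exists_pos_norm_le
  obtain ⟨y₀, hy₀⟩ := exists_norm_eq E (by positivity : 0 ≤ 2 * R + 1)
  have hball : ∀ᵐ y ∂ProbabilityTheory.cond μ (ball y₀ 1), ‖y - y₀‖ < 1 := by
    filter_upwards [ProbabilityTheory.ae_cond_mem measurableSet_ball] with y hy
    rwa [mem_ball_iff_norm] at hy
  refine ⟨ProbabilityTheory.cond μ (ball y₀ 1), ?_, ⟨(μ (ball y₀ 1))⁻¹, ?_, ?_⟩,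
    ⟨2 * R + 2, ?_⟩, fun x hx => ?_⟩
  · exact ProbabilityTheory.cond_isProbabilityMeasure_of_finite (measure_ball_pos μ y₀ one_pos).ne'
      measure_ball_lt_top.ne
  · exact ENNReal.inv_ne_top.2 (measure_ball_pos μ y₀ one_pos).ne'
  · rw [ProbabilityTheory.cond]
    gcongr
    exact Measure.restrict_le_self
  · filter_upwards [hball] with y hy
    linarith [norm_sub_norm_le y y₀]
  · filter_upwards [hball] with y hy hxy
    have hyx : ‖y‖ ≤ ‖x‖ + ‖x - y‖ := by simpa using norm_sub_le x (x - y)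
    linarith [norm_sub_norm_le y₀ y, norm_sub_rev y₀ y, hKR x hx, hKR _ hxy]

theorem exists_divg_eq_enorm_le (hN : N ≠ 0) {K : Set (Euc N)} (hK : IsCompact K) {p : ℝ≥0∞}
    (hp : N < p) (hp' : p ≠ ∞) :
    ∃ C : ℝ≥0, ∀ f : Euc N → ℝ, ContDiff ℝ 1 f → (∀ x ∉ K, f x = 0) →
      ∃ w : Euc N → Euc N, ContDiff ℝ 1 w ∧ (∀ x ∈ K, divg w x = f x) ∧
        ∀ x, ‖w x‖ₑ ≤ C * eLpNorm f p volume := by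
  have : Nonempty (Fin N) := ⟨⟨0, Nat.pos_of_ne_zero hN⟩⟩
  obtain ⟨ν, _, ⟨D, hD, hνD⟩, ⟨M, hM⟩, hνK⟩ :=
    exists_isProbabilityMeasure_sub_notMem (volume : Measure (Euc N)) hK.isBounded
  have hp1 : 1 ≤ p := (by exact_mod_cast Nat.one_le_iff_ne_zero.2 hN : (1 : ℝ≥0∞) ≤ N).trans hp.le
  obtain ⟨C, hC⟩ := exists_enorm_rayAverage_le hD hνD hM hp1 hp' (by simpa using hp)
  refine ⟨C, fun f hf hfK => ?_⟩
  have hfc : HasCompactSupport f := .intro hK hfK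
  exact ⟨rayAverage ν f, contDiff_rayAverage hf hfc hM,
    fun x hx => divg_rayAverage hf hfc hM ((hνK x hx).mono fun y hy => hfK _ hy),
    hC f hf.continuous⟩

end DivgPrimitive

section Erosion

variable {α : Type*} [PseudoMetricSpace α] {Ω : Opens α} {r : ℝ} {x y : α}

/-- The points of `Ω` at distance more than `r` from its complement. -/
def erosion (r : ℝ) (Ω : Opens α) : Opens α :=
  ⟨(cthickening r (Ω : Set α)ᶜ)ᶜ, isClosed_cthickening.isOpen_compl⟩

theorem mem_of_mem_erosion_of_dist_le (hx : x ∈ erosion r Ω) (hxy : dist x y ≤ r) : y ∈ Ω :=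
  by_contra fun hy => hx (mem_cthickening_of_dist_le x y r _ hy hxy)

theorem eventually_subset_erosion {K : Set α} (hK : IsCompact K) (hKΩ : K ⊆ Ω) :
    ∀ᶠ r in 𝓝 (0 : ℝ), K ⊆ erosion r Ω := by
  obtain ⟨δ, hδ, hdisj⟩ := (disjoint_compl_right_iff_subset.2 hKΩ).exists_cthickenings hK
    Ω.isOpen.isClosed_compl
  filter_upwards [gt_mem_nhds hδ] with r hr x hx hxr
  exact hdisj.le_bot ⟨self_subset_cthickening _ hx, cthickening_mono hr.le _ hxr⟩

end Erosion

section SmoothVariation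

open scoped Convolution ContDiff

variable {N : ℕ} {Ω : Opens (Euc N)} {c : ℝ}

/-- The total variation of `u` on `Ω`, tested against smooth fields, is at most `c`. Restricting
to smooth fields makes the notion stable under mollification. -/
def HasSmoothVariationLE (Ω : Opens (Euc N)) (u : Euc N → ℝ) (c : ℝ) : Prop :=
  ∀ z : 𝓓(Ω, Euc N), (∀ x, ‖z x‖ ≤ 1) → ∫ x in Ω, u x * divg z x ≤ c

theorem integral_comp_sub_mul_divg (g : Euc N → ℝ) (z : Euc N → Euc N) (y : Euc N) :
    ∫ x, g (x - y) * divg z x = ∫ x, g x * divg (fun x => z (x + y)) x := by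
  rw [← integral_add_right_eq_self _ y]
  simp only [add_sub_cancel_right, divg, fderiv_comp_add_right]

theorem HasSmoothVariationLE.comp_sub {g : Euc N → ℝ} (hg : HasSmoothVariationLE Ω g c) {r : ℝ}
    {y : Euc N} (hy : ‖y‖ ≤ r) : HasSmoothVariationLE (erosion r Ω) (fun x => g (x - y)) c := by
  intro z hz
  have hsupp : tsupport (fun x => z (x + y)) = (fun x => x + y) ⁻¹' tsupport z :=
    tsupport_comp_eq_preimage z (Homeomorph.addRight y)
  let w : 𝓓(Ω, Euc N) :=
    { toFun := fun x => z (x + y)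
      contDiff' := z.contDiff.comp (contDiff_id.add contDiff_const)
      hasCompactSupport' := z.hasCompactSupport.comp_homeomorph (Homeomorph.addRight y)
      tsupport_subset' := fun x hx => mem_of_mem_erosion_of_dist_le
        (z.tsupport_subset (hsupp ▸ hx : x ∈ (fun x => x + y) ⁻¹' tsupport z)) (by simpa using hy) }
  rw [setIntegral_mul_divg z.tsupport_subset, integral_comp_sub_mul_divg]
  exact (setIntegral_mul_divg w.tsupport_subset g).symm.trans_le (hg w fun x => hz _)

theorem HasSmoothVariationLE.convolution {g : Euc N → ℝ} (hgi : Integrable g)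
    (hg : HasSmoothVariationLE Ω g c) (φ : ContDiffBump (0 : Euc N)) :
    HasSmoothVariationLE (erosion φ.rOut Ω)
      (φ.normed volume ⋆[ContinuousLinearMap.lsmul ℝ ℝ, volume] g) c := by
  intro z hz
  have hdivg : Continuous (divg z) := continuous_divg (z.contDiff.of_le (by simp))
  obtain ⟨A, hA⟩ :=
    hdivg.bounded_above_of_compact_support (hasCompactSupport_divg z.hasCompactSupport)
  have hprod : Integrable (fun p : Euc N × Euc N =>
      φ.normed volume p.2 * (g (p.1 - p.2) * divg z p.1)) (volume.prod volume) := by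
    simpa [mul_assoc] using ((φ.integrable_normed (μ := volume)).convolution_integrand
      (ContinuousLinearMap.lsmul ℝ ℝ) hgi).mul_bdd (c := A)
        (hdivg.comp continuous_fst).aestronglyMeasurable (ae_of_all _ fun p => hA _)
  have htranslate : ∀ y, φ.normed volume y * ∫ x, g (x - y) * divg z x ≤
      φ.normed volume y * c := by
    intro y
    by_cases hy : φ.normed volume y = 0
    · simp [hy]
    · have hyr : y ∈ ball 0 φ.rOut := φ.support_normed_eq (μ := volume) ▸ hy
      refine mul_le_mul_of_nonneg_left ?_ (φ.nonneg_normed y)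
      rw [← setIntegral_mul_divg z.tsupport_subset fun x => g (x - y)]
      exact hg.comp_sub (mem_ball_zero_iff.1 hyr).le z hz
  rw [setIntegral_mul_divg z.tsupport_subset]
  calc ∫ x, (φ.normed volume ⋆[ContinuousLinearMap.lsmul ℝ ℝ, volume] g) x * divg z x
      = ∫ x, ∫ y, φ.normed volume y * (g (x - y) * divg z x) := by
        simp only [convolution_def, ContinuousLinearMap.lsmul_apply, smul_eq_mul,
          ← integral_mul_const, mul_assoc]
    _ = ∫ y, φ.normed volume y * ∫ x, g (x - y) * divg z x := by
        rw [integral_integral_swap hprod]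
        simp only [integral_const_mul]
    _ ≤ ∫ y, φ.normed volume y * c := by
        refine integral_mono ?_ (φ.integrable_normed.mul_const c) htranslate
        simpa only [integral_const_mul] using hprod.integral_prod_right
    _ = c := by rw [integral_mul_const, φ.integral_normed, one_mul]

variable {G : Euc N → ℝ}

theorem HasSmoothVariationLE.integral_fderiv_apply_le (hGc : HasSmoothVariationLE Ω G c)
    (hG : ContDiff ℝ ∞ G) (z : 𝓓(Ω, Euc N)) (hz : ∀ x, ‖z x‖ ≤ 1) :
    ∫ x, fderiv ℝ G x (z x) ≤ c := by
  have hneg := hGc (-z) fun x => by simpa using hz x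
  rw [setIntegral_mul_divg (-z).tsupport_subset, integral_mul_divg (hG.of_le (by simp))
    ((-z).contDiff.of_le (by simp)) (-z).hasCompactSupport, ← integral_neg] at hneg
  simpa using hneg

theorem le_sq_div_sqrt_add {a ε : ℝ} (ha : 0 ≤ a) (hε : 0 < ε) :
    a ≤ a ^ 2 / √(ε ^ 2 + a ^ 2) + ε := by
  have hsqrt : √(ε ^ 2 + a ^ 2) ≤ ε + a := Real.sqrt_le_iff.2 ⟨by positivity, by nlinarith⟩
  calc a ≤ a ^ 2 / (ε + a) + ε := by
        rw [div_add' _ _ _ (by positivity), le_div_iff₀ (by positivity)]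
        nlinarith
    _ ≤ a ^ 2 / √(ε ^ 2 + a ^ 2) + ε := by gcongr

-- The field `χ • ∇G / √(ε² + ‖∇G‖²)` is a smooth approximation of the optimal `χ • ∇G / ‖∇G‖`.
theorem HasSmoothVariationLE.integral_mul_sq_div_sqrt_le (hGc : HasSmoothVariationLE Ω G c)
    (hG : ContDiff ℝ ∞ G) (χ : 𝓓(Ω, ℝ)) (hχ : ∀ x, χ x ∈ Icc 0 1) {ε : ℝ} (hε : 0 < ε) :
    ∫ x, χ x * (‖fderiv ℝ G x‖ ^ 2 / √(ε ^ 2 + ‖fderiv ℝ G x‖ ^ 2)) ≤ c := by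
  let D : Euc N → Euc N := gradient G
  have hD : ∀ x, ‖D x‖ = ‖fderiv ℝ G x‖ := fun x => by simp [D, gradient]
  have hDs : ContDiff ℝ ∞ D :=
    (InnerProductSpace.toDual ℝ (Euc N)).symm.toContinuousLinearEquiv.contDiff.comp
      (hG.fderiv_right (by simp))
  have hpos : ∀ x, 0 < ε ^ 2 + ‖D x‖ ^ 2 := fun x => by positivity
  have hscalar : ContDiff ℝ ∞ fun x => χ x / √(ε ^ 2 + ‖D x‖ ^ 2) :=
    χ.contDiff.div ((contDiff_const.add (hDs.norm_sq ℝ)).sqrt fun x => (hpos x).ne')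
      fun x => (Real.sqrt_pos.2 (hpos x)).ne'
  have hsupp : tsupport (fun x => (χ x / √(ε ^ 2 + ‖D x‖ ^ 2)) • D x) ⊆ tsupport χ :=
    closure_mono fun x hx hχx => hx (by simp [hχx])
  let z : 𝓓(Ω, Euc N) :=
    { toFun := fun x => (χ x / √(ε ^ 2 + ‖D x‖ ^ 2)) • D x
      contDiff' := hscalar.smul hDs
      hasCompactSupport' := χ.hasCompactSupport.of_isClosed_subset (isClosed_tsupport _) hsupp
      tsupport_subset' := hsupp.trans χ.tsupport_subset }
  have hz : ∀ x, z x = (χ x / √(ε ^ 2 + ‖D x‖ ^ 2)) • D x := fun _ => rfl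
  have hz1 : ∀ x, ‖z x‖ ≤ 1 := by
    intro x
    rw [hz, norm_smul, norm_div, Real.norm_of_nonneg (hχ x).1,
      Real.norm_of_nonneg (Real.sqrt_nonneg _), div_mul_eq_mul_div]
    refine div_le_one_of_le₀ ?_ (Real.sqrt_nonneg _)
    exact (mul_le_of_le_one_left (norm_nonneg _) (hχ x).2).trans
      (Real.le_sqrt_of_sq_le (by nlinarith [sq_nonneg ε]))
  have happly : ∀ x, fderiv ℝ G x (z x) =
      χ x * (‖fderiv ℝ G x‖ ^ 2 / √(ε ^ 2 + ‖fderiv ℝ G x‖ ^ 2)) := by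
    intro x
    have hDD : fderiv ℝ G x (D x) = ‖D x‖ ^ 2 := by
      rw [← real_inner_self_eq_norm_sq, inner_gradient_left]
    rw [hz, map_smul, hDD, ← hD, smul_eq_mul]
    ring
  simpa only [happly] using hGc.integral_fderiv_apply_le hG z hz1

theorem HasSmoothVariationLE.integral_mul_norm_fderiv_le (hGc : HasSmoothVariationLE Ω G c)
    (hG : ContDiff ℝ ∞ G) (χ : 𝓓(Ω, ℝ)) (hχ : ∀ x, χ x ∈ Icc 0 1) :
    ∫ x, χ x * ‖fderiv ℝ G x‖ ≤ c := by
  have hDG : Continuous fun x => ‖fderiv ℝ G x‖ := (hG.continuous_fderiv (by simp)).norm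
  have hint : ∀ {f : Euc N → ℝ}, Continuous f → Integrable fun x => χ x * f x := fun hf =>
    (χ.continuous.mul hf).integrable_of_hasCompactSupport χ.hasCompactSupport.mul_right
  have happrox : ∀ ε > 0, ∫ x, χ x * ‖fderiv ℝ G x‖ ≤ c + ε * ∫ x, χ x := by
    intro ε hε
    have hsq : Integrable fun x =>
        χ x * (‖fderiv ℝ G x‖ ^ 2 / √(ε ^ 2 + ‖fderiv ℝ G x‖ ^ 2)) :=
      hint (by fun_prop (disch := intro; positivity))
    have hχi : Integrable fun x => ε * χ x := by
      simpa only [mul_comm] using hint (continuous_const (y := ε))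
    calc ∫ x, χ x * ‖fderiv ℝ G x‖
        ≤ ∫ x, (χ x * (‖fderiv ℝ G x‖ ^ 2 / √(ε ^ 2 + ‖fderiv ℝ G x‖ ^ 2)) + ε * χ x) := by
          refine integral_mono (hint hDG) (hsq.add hχi) fun x => ?_
          have := mul_le_mul_of_nonneg_left (le_sq_div_sqrt_add (norm_nonneg (fderiv ℝ G x)) hε)
            (hχ x).1
          linarith
      _ ≤ c + ε * ∫ x, χ x := by
          rw [integral_add hsq hχi, integral_const_mul]
          gcongr
          exact hGc.integral_mul_sq_div_sqrt_le hG χ hχ hε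
  have hlim : Tendsto (fun ε : ℝ => c + ε * ∫ x, χ x) (𝓝[>] 0) (𝓝 c) := by
    refine Tendsto.mono_left ?_ nhdsWithin_le_nhds
    simpa using ((tendsto_id (x := 𝓝 (0 : ℝ))).mul_const (∫ x, χ x)).const_add c
  exact ge_of_tendsto hlim (eventually_mem_nhdsWithin.mono happrox)

theorem exists_testFunction_eq_one {E : Type*} [NormedAddCommGroup E] [NormedSpace ℝ E]
    [FiniteDimensional ℝ E] {Ω : Opens E} {K : Set E} (hK : IsCompact K) (hKΩ : K ⊆ Ω) :
    ∃ χ : 𝓓(Ω, ℝ), (∀ x, χ x ∈ Icc 0 1) ∧ ∀ x ∈ K, χ x = 1 := by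
  obtain ⟨L, hL, hKL, hLΩ⟩ := exists_compact_between hK Ω.isOpen hKΩ
  obtain ⟨χ, hχ1, hχ0, hχ⟩ := exists_contMDiffMap_one_nhds_of_subset_interior (n := ⊤)
    (modelWithCornersSelf ℝ E) hK.isClosed hKL
  have hsupp : tsupport χ ⊆ L :=
    closure_minimal (fun x hx => by_contra fun hxL => hx (hχ0 x hxL)) hL.isClosed
  exact ⟨⟨χ, χ.contMDiff.contDiff, hL.of_isClosed_subset (isClosed_tsupport _) hsupp,
    hsupp.trans hLΩ⟩, hχ, hχ1.self_of_nhdsSet⟩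

theorem HasSmoothVariationLE.setLIntegral_enorm_fderiv_le (hGc : HasSmoothVariationLE Ω G c)
    (hG : ContDiff ℝ ∞ G) : ∫⁻ x in Ω, ‖fderiv ℝ G x‖ₑ ≤ ENNReal.ofReal c := by
  have hDG : Continuous (fderiv ℝ G) := hG.continuous_fderiv (by simp)
  let μ : Measure (Euc N) := volume.withDensity fun x => ‖fderiv ℝ G x‖₊
  have : IsLocallyFiniteMeasure μ := .withDensity_coe hDG.nnnorm
  have hcompact : ∀ K ⊆ (Ω : Set (Euc N)), IsCompact K → μ K ≤ ENNReal.ofReal c := by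
    intro K hKΩ hK
    obtain ⟨χ, hχ, hχK⟩ := exists_testFunction_eq_one hK hKΩ
    have hint : Integrable fun x => χ x * ‖fderiv ℝ G x‖ :=
      (χ.continuous.mul hDG.norm).integrable_of_hasCompactSupport χ.hasCompactSupport.mul_right
    calc μ K = ∫⁻ x in K, ENNReal.ofReal (χ x * ‖fderiv ℝ G x‖) := by
          rw [withDensity_apply _ hK.measurableSet]
          refine setLIntegral_congr_fun hK.measurableSet fun x hx => ?_
          simp [hχK x hx, enorm_eq_nnnorm]
      _ ≤ ∫⁻ x, ENNReal.ofReal (χ x * ‖fderiv ℝ G x‖) := setLIntegral_le_lintegral _ _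
      _ = ENNReal.ofReal (∫ x, χ x * ‖fderiv ℝ G x‖) :=
          (ofReal_integral_eq_lintegral_ofReal hint
            (ae_of_all _ fun x => mul_nonneg (hχ x).1 (norm_nonneg _))).symm
      _ ≤ ENNReal.ofReal c := ENNReal.ofReal_le_ofReal (hGc.integral_mul_norm_fderiv_le hG χ hχ)
  calc ∫⁻ x in Ω, ‖fderiv ℝ G x‖ₑ = μ Ω := (withDensity_apply _ Ω.isOpen.measurableSet).symm
    _ ≤ ENNReal.ofReal c := by
      rw [Ω.isOpen.measure_eq_iSup_isCompact]
      exact iSup₂_le fun K hK => iSup_le (hcompact K hK)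

end SmoothVariation

section SmoothHeaviside

/-- Smooth monotone approximations of the Heaviside function. -/
def smoothHeaviside (n : ℕ) (s : ℝ) : ℝ := Real.smoothTransition ((n + 1) * s)

theorem contDiff_smoothHeaviside (n : ℕ) {m : ℕ∞} : ContDiff ℝ m (smoothHeaviside n) :=
  Real.smoothTransition.contDiff.comp (contDiff_const.mul contDiff_id)

theorem monotone_smoothHeaviside (n : ℕ) : Monotone (smoothHeaviside n) := fun _ _ h =>
  Real.smoothTransition.monotone (by gcongr)

theorem smoothHeaviside_mem_Icc (n : ℕ) (s : ℝ) : smoothHeaviside n s ∈ Icc 0 1 :=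
  ⟨Real.smoothTransition.nonneg _, Real.smoothTransition.le_one _⟩

theorem tendsto_smoothHeaviside {a : ℕ → ℝ} {b : ℝ} (ha : Tendsto a atTop (𝓝 b)) (hb : b ≠ 0) :
    Tendsto (fun n => smoothHeaviside n (a n)) atTop (𝓝 ((Ioi 0).indicator (fun _ => 1) b)) := by
  rcases hb.lt_or_gt with hb | hb
  · rw [indicator_of_notMem (notMem_Ioi.2 hb.le)]
    refine tendsto_const_nhds.congr' ?_
    filter_upwards [ha.eventually_lt_const hb] with n hn
    exact (Real.smoothTransition.zero_of_nonpos
      (mul_nonpos_of_nonneg_of_nonpos (by positivity) hn.le)).symm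
  · rw [indicator_of_mem (mem_Ioi.2 hb)]
    have hlarge : Tendsto (fun n : ℕ => ((n : ℝ) + 1) * a n) atTop atTop :=
      (tendsto_natCast_atTop_atTop.atTop_add tendsto_const_nhds).atTop_mul_pos hb ha
    refine tendsto_const_nhds.congr' ?_
    filter_upwards [hlarge.eventually_ge_atTop 1] with n hn
    exact (Real.smoothTransition.one_of_one_le hn).symm

end SmoothHeaviside

section Coarea

open scoped Convolution ContDiff

variable {N : ℕ} {Ω : Opens (Euc N)} {u : Euc N → ℝ} {c : ℝ}

theorem lintegral_deriv_le_one {T : ℝ → ℝ} (hT : Differentiable ℝ T) (hmono : Monotone T)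
    (hT01 : ∀ s, T s ∈ Icc 0 1) : ∫⁻ s, ENNReal.ofReal (deriv T s) ≤ 1 :=
  calc ∫⁻ s, ENNReal.ofReal (deriv T s) = volume (T '' univ) := by
        simpa using lintegral_deriv_eq_volume_image_of_monotoneOn MeasurableSet.univ
          (fun s _ => (hT s).hasDerivAt.hasDerivWithinAt) (hmono.monotoneOn univ)
    _ ≤ volume (Icc (0 : ℝ) 1) := measure_mono (image_subset_iff.2 fun s _ => hT01 s)
    _ = 1 := by simp

section Composition

variable {E : Type*} [NormedAddCommGroup E] [NormedSpace ℝ E] {G : E → ℝ} {T : ℝ → ℝ}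

theorem enorm_fderiv_comp_sub (hG : Differentiable ℝ G) (hT : Differentiable ℝ T)
    (hmono : Monotone T) (t : ℝ) (x : E) : ‖fderiv ℝ (fun y => T (G y - t)) x‖ₑ =
      ENNReal.ofReal (deriv T (G x - t)) * ‖fderiv ℝ G x‖ₑ := by
  have hcomp := (hT (G x - t)).hasDerivAt.comp_hasFDerivAt x ((hG x).hasFDerivAt.sub_const t)
  change ‖fderiv ℝ (T ∘ fun y => G y - t) x‖ₑ = _
  rw [hcomp.fderiv, enorm_smul, Real.enorm_of_nonneg hmono.deriv_nonneg]

variable [MeasurableSpace E] [BorelSpace E] [SecondCountableTopology E]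

theorem measurable_enorm_fderiv_comp_sub (hG : ContDiff ℝ 1 G) (hT : ContDiff ℝ 1 T) :
    Measurable fun p : ℝ × E => ‖fderiv ℝ (fun y => T (G y - p.1)) p.2‖ₑ := by
  have hTG : ContDiff ℝ 1 fun q : (ℝ × E) × E => T (G q.2 - q.1.1) := by fun_prop
  have : ContDiff ℝ 0 fun p : ℝ × E => fderiv ℝ (fun y => T (G y - p.1)) p.2 :=
    hTG.fderiv contDiff_snd (by norm_num)
  exact this.continuous.enorm.measurable

-- By Fubini, integrating `T' (G x - t)` over the levels `t` contributes a factor of at most `1`.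
theorem lintegral_lintegral_enorm_fderiv_comp_sub_le {μ : Measure E} [SFinite μ]
    (hG : ContDiff ℝ 1 G) (hT : ContDiff ℝ 1 T) (hmono : Monotone T) (hT01 : ∀ s, T s ∈ Icc 0 1) :
    ∫⁻ t, ∫⁻ x, ‖fderiv ℝ (fun y => T (G y - t)) x‖ₑ ∂μ ≤ ∫⁻ x, ‖fderiv ℝ G x‖ₑ ∂μ := by
  have hTd : Differentiable ℝ T := hT.differentiable one_ne_zero
  rw [lintegral_lintegral_swap (measurable_enorm_fderiv_comp_sub hG hT).aemeasurable]
  refine lintegral_mono fun x => ?_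
  simp only [enorm_fderiv_comp_sub (hG.differentiable one_ne_zero) hTd hmono]
  rw [lintegral_mul_const' _ _ enorm_ne_top,
    lintegral_sub_left_eq_self (fun s => ENNReal.ofReal (deriv T s)) (G x)]
  exact mul_le_of_le_one_left' (lintegral_deriv_le_one hTd hmono hT01)

end Composition

theorem ofReal_integral_mul_divg_le {f : Euc N → ℝ} (hf : ContDiff ℝ 1 f) {z : Euc N → Euc N}
    (hz : ContDiff ℝ 1 z) (hzc : HasCompactSupport z) (hz1 : ∀ x, ‖z x‖ ≤ 1) {U : Set (Euc N)}
    (hzU : tsupport z ⊆ U) :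
    ENNReal.ofReal (∫ x, f x * divg z x) ≤ ∫⁻ x in U, ‖fderiv ℝ f x‖ₑ := by
  have hsupp : ∀ x ∉ U, fderiv ℝ f x (z x) = 0 := fun x hx => by
    rw [image_eq_zero_of_notMem_tsupport fun h => hx (hzU h), map_zero]
  rw [integral_mul_divg hf hz hzc, ← setIntegral_eq_integral_of_forall_compl_eq_zero hsupp]
  calc ENNReal.ofReal (-∫ x in U, fderiv ℝ f x (z x))
      ≤ ‖∫ x in U, fderiv ℝ f x (z x)‖ₑ := (Real.ofReal_le_enorm _).trans_eq (enorm_neg _)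
    _ ≤ ∫⁻ x in U, ‖fderiv ℝ f x (z x)‖ₑ := enorm_integral_le_lintegral_enorm _
    _ ≤ ∫⁻ x in U, ‖fderiv ℝ f x‖ₑ := lintegral_mono fun x => enorm_le_iff_norm_le.2 <|
        (fderiv ℝ f x).le_of_opNorm_le_of_le le_rfl (hz1 x) |>.trans_eq (mul_one _)

theorem TV_le_liminf_setLIntegral_enorm_fderiv {f : ℕ → Euc N → ℝ} (hf : ∀ n, ContDiff ℝ 1 (f n))
    {C : ℝ} (hfC : ∀ n x, ‖f n x‖ ≤ C) (hlim : ∀ᵐ x, Tendsto (f · x) atTop (𝓝 (u x)))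
    {Ω : Set (Euc N)} {U : ℕ → Set (Euc N)} (hU : ∀ K ⊆ Ω, IsCompact K → ∀ᶠ n in atTop, K ⊆ U n) :
    TV Ω u ≤ liminf (fun n => ∫⁻ x in U n, ‖fderiv ℝ (f n) x‖ₑ) atTop := by
  refine iSup_le fun z => iSup_le fun hz => iSup_le fun hzc => iSup₂_le fun hzΩ hz1 => ?_
  have hdivg := continuous_divg hz
  have hint : Integrable fun x => C * ‖divg z x‖ :=
    (hdivg.integrable_of_hasCompactSupport (hasCompactSupport_divg hzc)).norm.const_mul C
  have hpairing : Tendsto (fun n => ∫ x, f n x * divg z x) atTop (𝓝 (∫ x, u x * divg z x)) := by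
    refine tendsto_integral_of_dominated_convergence (fun x => C * ‖divg z x‖)
      (fun n => ((hf n).continuous.mul hdivg).aestronglyMeasurable) hint
      (fun n => ae_of_all _ fun x => ?_) (hlim.mono fun x hx => hx.mul_const _)
    rw [norm_mul]
    gcongr
    exact hfC n x
  rw [setIntegral_mul_divg hzΩ, ← ((ENNReal.continuous_ofReal.tendsto _).comp hpairing).liminf_eq]
  refine liminf_le_liminf ?_
  filter_upwards [hU _ hzΩ hzc] with n hn
  exact ofReal_integral_mul_divg_le (hf n) hz hzc hz1 hn

theorem HasSmoothVariationLE.exists_contDiff_tendsto (hui : Integrable u)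
    (hu : HasSmoothVariationLE Ω u c) :
    ∃ (G : ℕ → Euc N → ℝ) (U : ℕ → Opens (Euc N)), (∀ n, ContDiff ℝ 1 (G n)) ∧
      (∀ᵐ x, Tendsto (G · x) atTop (𝓝 (u x))) ∧
      (∀ K ⊆ (Ω : Set (Euc N)), IsCompact K → ∀ᶠ n in atTop, K ⊆ U n) ∧
      ∀ n, ∫⁻ x in U n, ‖fderiv ℝ (G n) x‖ₑ ≤ ENNReal.ofReal c := by
  let r : ℕ → ℝ := fun n => 1 / ((n : ℝ) + 1)
  have hr : ∀ n, 0 < r n := fun n => Nat.one_div_pos_of_nat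
  have hr0 : Tendsto r atTop (𝓝 0) := tendsto_one_div_add_atTop_nhds_zero_nat
  let φ : ℕ → ContDiffBump (0 : Euc N) := fun n =>
    ⟨r n / 2, r n, half_pos (hr n), half_lt_self (hr n)⟩
  have hsmooth : ∀ n, ContDiff ℝ ∞
      ((φ n).normed volume ⋆[ContinuousLinearMap.lsmul ℝ ℝ, volume] u) := fun n =>
    (φ n).hasCompactSupport_normed.contDiff_convolution_left _ (φ n).contDiff_normed
      hui.locallyIntegrable
  refine ⟨fun n => (φ n).normed volume ⋆[ContinuousLinearMap.lsmul ℝ ℝ, volume] u,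
    fun n => erosion (r n) Ω, fun n => (hsmooth n).of_le (by simp), ?_,
    fun K hKΩ hK => hr0.eventually (eventually_subset_erosion hK hKΩ),
    fun n => (hu.convolution hui (φ n)).setLIntegral_enorm_fderiv_le (hsmooth n)⟩
  exact ContDiffBump.ae_convolution_tendsto_right_of_locallyIntegrable (K := 2) hr0
    (Eventually.of_forall fun n => (mul_div_cancel₀ _ two_ne_zero).ge) hui.locallyIntegrable

theorem HasSmoothVariationLE.lintegral_Perim_le_of_integrable (hui : Integrable u)
    (hu : HasSmoothVariationLE Ω u c) :
    ∫⁻ t, Perim {x | t < u x} Ω ≤ ENNReal.ofReal c := by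
  obtain ⟨G, U, hG, hGu, hU, hGc⟩ := hu.exists_contDiff_tendsto hui
  let h : ℕ → ℝ → ℝ≥0∞ := fun n t =>
    ∫⁻ x in U n, ‖fderiv ℝ (fun y => smoothHeaviside n (G n y - t)) x‖ₑ
  have hh : ∀ n, ∫⁻ t, h n t ≤ ENNReal.ofReal c := fun n =>
    (lintegral_lintegral_enorm_fderiv_comp_sub_le (hG n) (contDiff_smoothHeaviside n)
      (monotone_smoothHeaviside n) (smoothHeaviside_mem_Icc n)).trans (hGc n)
  have hPerim : ∀ᵐ t, Perim {x | t < u x} Ω ≤ liminf (h · t) atTop := by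
    have hlevel := Measure.countable_meas_level_set_pos₀ hui.1.aemeasurable.nullMeasurable
    filter_upwards [hlevel.ae_notMem volume] with t ht
    refine TV_le_liminf_setLIntegral_enorm_fderiv (C := 1) (fun n => ?_) (fun n x => ?_) ?_ hU
    · exact (contDiff_smoothHeaviside n).comp ((hG n).sub contDiff_const)
    · obtain ⟨h0, h1⟩ := smoothHeaviside_mem_Icc n (G n x - t)
      rwa [Real.norm_of_nonneg h0]
    · have hne : ∀ᵐ x, u x ≠ t := ae_iff.2 (by simpa using ht)
      filter_upwards [hGu, hne] with x hx hxt
      simpa [indicator_apply] using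
        tendsto_smoothHeaviside (hx.sub_const t) (sub_ne_zero.2 hxt)
  have hhm : ∀ n, Measurable (h n) := fun n =>
    (measurable_enorm_fderiv_comp_sub (hG n) (contDiff_smoothHeaviside n)).lintegral_prod_right'
  calc ∫⁻ t, Perim {x | t < u x} Ω ≤ ∫⁻ t, liminf (h · t) atTop := lintegral_mono_ae hPerim
    _ ≤ liminf (fun n => ∫⁻ t, h n t) atTop := lintegral_liminf_le hhm
    _ ≤ ENNReal.ofReal c := liminf_le_of_le (by isBoundedDefault) fun b hb =>
        let ⟨n, hn⟩ := hb.exists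
        hn.trans (hh n)

end Coarea

section LayerCake

/-- The kernel `1_{t < a} - 1_{t < 0}` of the layer-cake formula `a = ∫ t, layerKernel a t`, which
holds for every real `a`. -/
def layerKernel (a t : ℝ) : ℝ :=
  (Iio a).indicator (fun _ => 1) t - (Iio 0).indicator (fun _ => 1) t

theorem layerKernel_eq_indicator_Ico (a : ℝ) :
    layerKernel a = (Ico (min 0 a) (max 0 a)).indicator fun _ => (SignType.sign a : ℝ) := by
  ext t
  rcases lt_trichotomy a 0 with ha | rfl | ha
  · simp only [layerKernel, indicator_apply, mem_Iio, mem_Ico, min_eq_right ha.le,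
      max_eq_left ha.le, sign_neg ha, SignType.coe_neg, SignType.coe_one]
    grind
  · simp [layerKernel]
  · simp only [layerKernel, indicator_apply, mem_Iio, mem_Ico, min_eq_left ha.le,
      max_eq_right ha.le, sign_pos ha, SignType.coe_one]
    grind

theorem integrable_layerKernel (a : ℝ) : Integrable (layerKernel a) := by
  rw [layerKernel_eq_indicator_Ico, integrable_indicator_iff measurableSet_Ico]
  exact integrableOn_const (by simp)

theorem integral_layerKernel (a : ℝ) : ∫ t, layerKernel a t = a := by
  simp [layerKernel_eq_indicator_Ico, integral_indicator_const, measurableSet_Ico,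
    max_sub_min_eq_abs']

theorem integral_norm_layerKernel (a : ℝ) : ∫ t, ‖layerKernel a t‖ = |a| := by
  have hsign : |a| * |(SignType.sign a : ℝ)| = |a| := by
    rw [← abs_mul, self_mul_sign, abs_abs]
  simp [layerKernel_eq_indicator_Ico, norm_indicator_eq_indicator_norm, integral_indicator_const,
    measurableSet_Ico, max_sub_min_eq_abs', hsign]

theorem ofReal_integral_le_lintegral_ofReal {α : Type*} [MeasurableSpace α] {μ : Measure α}
    (f : α → ℝ) : ENNReal.ofReal (∫ x, f x ∂μ) ≤ ∫⁻ x, ENNReal.ofReal (f x) ∂μ := by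
  by_cases hf : Integrable f μ
  · rw [integral_eq_lintegral_pos_part_sub_lintegral_neg_part hf]
    exact (ENNReal.ofReal_le_ofReal (sub_le_self _ ENNReal.toReal_nonneg)).trans
      ENNReal.ofReal_toReal_le
  · simp [integral_undef hf]

variable {α : Type*} [MeasurableSpace α] {μ : Measure α} {u d : α → ℝ} {A : ℝ}

theorem integrable_layerKernel_prod (hu : Integrable u μ) :
    Integrable (fun p : α × ℝ => layerKernel (u p.1) p.2) (μ.prod volume) := by
  have hmeas : AEStronglyMeasurable (fun p : α × ℝ => layerKernel (u p.1) p.2)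
      (μ.prod volume) := by
    refine .sub ?_ ?_
    · exact (aemeasurable_const.indicator₀ (nullMeasurableSet_lt
        measurable_snd.aemeasurable hu.1.aemeasurable.comp_fst)).aestronglyMeasurable
    · exact (measurable_const.indicator
        (measurable_snd measurableSet_Iio)).aestronglyMeasurable
  rw [integrable_prod_iff hmeas]
  refine ⟨ae_of_all _ fun x => integrable_layerKernel (u x), ?_⟩
  simpa only [integral_norm_layerKernel] using hu.abs

-- Since `∫ d = 0`, the term `1_{t < 0}` of the layer kernel does not contribute.
theorem integral_mul_eq_integral_indicator_lt [SFinite μ] (hu : Integrable u μ)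
    (hd : Integrable d μ) (hdA : ∀ x, ‖d x‖ ≤ A) (hd0 : ∫ x, d x ∂μ = 0) :
    ∫ x, u x * d x ∂μ = ∫ t, ∫ x, {x | t < u x}.indicator (fun _ => (1 : ℝ)) x * d x ∂μ := by
  have hprod : Integrable (fun p : α × ℝ => layerKernel (u p.1) p.2 * d p.1)
      (μ.prod volume) :=
    (integrable_layerKernel_prod hu).mul_bdd hd.1.comp_fst (ae_of_all _ fun p => hdA p.1)
  have hlevel : ∀ t, ∫ x, layerKernel (u x) t * d x ∂μ =
      ∫ x, {x | t < u x}.indicator (fun _ => (1 : ℝ)) x * d x ∂μ := by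
    intro t
    have hset : NullMeasurableSet {x | t < u x} μ :=
      nullMeasurableSet_lt aemeasurable_const hu.1.aemeasurable
    have hint : Integrable (fun x => (Iio (u x)).indicator (fun _ => (1 : ℝ)) t * d x) μ := by
      refine (hd.indicator₀ hset).congr (ae_of_all _ fun x => ?_)
      simp [indicator_apply]
    simp only [layerKernel, sub_mul]
    rw [integral_sub hint (hd.const_mul _), integral_const_mul, hd0, mul_zero, sub_zero]
    rfl
  calc ∫ x, u x * d x ∂μ = ∫ x, (∫ t, layerKernel (u x) t * d x) ∂μ := by
        simp only [integral_mul_const, integral_layerKernel]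
    _ = ∫ t, ∫ x, layerKernel (u x) t * d x ∂μ := integral_integral_swap hprod
    _ = _ := by simp only [hlevel]

end LayerCake

section LeastGradient

variable {N : ℕ} {u g : Euc N → ℝ}

theorem ofReal_integral_le_TV {Ω : Set (Euc N)} (u : Euc N → ℝ) {z : Euc N → Euc N}
    (hz : ContDiff ℝ 1 z) (hzc : HasCompactSupport z) (hzΩ : tsupport z ⊆ Ω)
    (hz1 : ∀ x, ‖z x‖ ≤ 1) : ENNReal.ofReal (∫ x in Ω, u x * divg z x) ≤ TV Ω u :=
  le_iSup₂_of_le z hz <| le_iSup₂_of_le hzc hzΩ <| le_iSup_of_le hz1 le_rfl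

theorem TV_le_lintegral_Perim {Ω : Set (Euc N)} (hu : IntegrableOn u Ω) :
    TV Ω u ≤ ∫⁻ t, Perim {x | t < u x} Ω := by
  refine iSup_le fun z => iSup_le fun hz => iSup_le fun hzc => iSup₂_le fun hzΩ hz1 => ?_
  have hdivg := continuous_divg hz
  have hdivgc := hasCompactSupport_divg hzc
  obtain ⟨A, hA⟩ := hdivg.bounded_above_of_compact_support hdivgc
  have hdivg0 : ∫ x in Ω, divg z x = 0 := by
    simpa [integral_divg hz hzc] using setIntegral_mul_divg hzΩ fun _ => 1
  rw [integral_mul_eq_integral_indicator_lt hu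
    (hdivg.integrable_of_hasCompactSupport hdivgc).integrableOn hA hdivg0]
  exact (ofReal_integral_le_lintegral_ofReal _).trans
    (lintegral_mono fun t => ofReal_integral_le_TV _ hz hzc hzΩ hz1)

theorem TV_congr {Ω : Set (Euc N)} (hΩ : MeasurableSet Ω) (h : EqOn u g Ω) : TV Ω u = TV Ω g := by
  have hpairing : ∀ z, ∫ x in Ω, u x * divg z x = ∫ x in Ω, g x * divg z x := fun z =>
    setIntegral_congr_fun hΩ fun x hx => by rw [h hx]
  simp only [TV, hpairing]

variable {Ω : Opens (Euc N)} {c : ℝ}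

theorem HasSmoothVariationLE.congr (hu : HasSmoothVariationLE Ω u c) (h : EqOn u g Ω) :
    HasSmoothVariationLE Ω g c := fun z hz =>
  (setIntegral_congr_fun Ω.isOpen.measurableSet fun x hx => by rw [h hx]).trans_le (hu z hz)

theorem HasSmoothVariationLE.lintegral_Perim_le (hui : IntegrableOn u Ω)
    (hu : HasSmoothVariationLE Ω u c) : ∫⁻ t, Perim {x | t < u x} Ω ≤ ENNReal.ofReal c := by
  have hΩ := Ω.isOpen.measurableSet
  have hind : EqOn u ((Ω : Set (Euc N)).indicator u) Ω := fun x hx => (indicator_of_mem hx u).symm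
  have hPerim : ∀ t, Perim {x | t < u x} Ω = Perim {x | t < (Ω : Set (Euc N)).indicator u x} Ω :=
    fun t => TV_congr hΩ fun x hx => by simp only [indicator_apply, mem_ofPred_eq, ← hind hx]
  simp only [hPerim]
  exact (hu.congr hind).lintegral_Perim_le_of_integrable ((integrable_indicator_iff hΩ).2 hui)

theorem Perim_superlevel_le_of_isLeastGradient {t : ℝ} {Ω : Set (Euc N)} {K : Set (Euc N)}
    (hu : IsLeastGradient Ω ({x | t < u x}.indicator fun _ => (1 : ℝ))) (hK : IsCompact K)
    (hKΩ : K ⊆ Ω) (hug : ∀ x ∉ K, u x = g x) : Perim {x | t < u x} Ω ≤ Perim {x | t < g x} Ω := by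
  let v : Euc N → ℝ :=
    {x | t < g x}.indicator (fun _ => 1) - {x | t < u x}.indicator (fun _ => 1)
  have hv : tsupport v ⊆ K := closure_minimal
    (fun x hx => by_contra fun hxK => hx (by simp [v, indicator_apply, hug x hxK])) hK.isClosed
  simpa only [Perim, v, add_sub_cancel] using
    hu v (hK.of_isClosed_subset (isClosed_tsupport _) hv) (hv.trans hKΩ)

theorem TV_le_of_isLeastGradient_superlevel
    (hlevel : ∀ᵐ t : ℝ, IsLeastGradient Ω ({x | t < u x}.indicator fun _ => (1 : ℝ)))
    (hu : IntegrableOn u Ω) (hg : IntegrableOn g Ω) {K : Set (Euc N)} (hK : IsCompact K)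
    (hKΩ : K ⊆ Ω) (hug : ∀ x ∉ K, u x = g x) (hgc : HasSmoothVariationLE Ω g c) :
    TV Ω u ≤ ENNReal.ofReal c :=
  calc TV Ω u ≤ ∫⁻ t, Perim {x | t < u x} Ω := TV_le_lintegral_Perim hu
    _ ≤ ∫⁻ t, Perim {x | t < g x} Ω :=
        lintegral_mono_ae <| hlevel.mono fun _ ht =>
          Perim_superlevel_le_of_isLeastGradient ht hK hKΩ hug
    _ ≤ ENNReal.ofReal c := hgc.lintegral_Perim_le hg

end LeastGradient

section Multiplier

theorem exists_continuousLinearMap_apply_eq {E F : Type*} [AddCommGroup E] [Module ℝ E]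
    [SeminormedAddCommGroup F] [NormedSpace ℝ F] (A : E →ₗ[ℝ] F) (m : E →ₗ[ℝ] ℝ) {C : ℝ}
    (hm : ∀ x, m x ≤ C * ‖A x‖) : ∃ l : F →L[ℝ] ℝ, ∀ x, l (A x) = m x := by
  have hm' (x : E) : |m x| ≤ C * ‖A x‖ := abs_le'.2 ⟨hm x, by simpa using hm (-x)⟩
  obtain ⟨s, hs⟩ := A.rangeRestrict.exists_rightInverse_of_surjective A.range_rangeRestrict
  have hAs (y : A.range) : A (s y) = y := congrArg Subtype.val (LinearMap.congr_fun hs y)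
  obtain ⟨l, hl, -⟩ := exists_extension_norm_eq A.range
    ((m ∘ₗ s).mkContinuous C fun y => by simpa [hAs] using hm' (s y))
  refine ⟨l, fun x => ?_⟩
  have hker : A (s (A.rangeRestrict x) - x) = 0 := by simp [hAs]
  have hmker : m (s (A.rangeRestrict x) - x) = 0 := by
    simpa only [hker, norm_zero, mul_zero, abs_nonpos_iff] using hm' (s (A.rangeRestrict x) - x)
  rw [map_sub, sub_eq_zero] at hmker
  exact (hl (A.rangeRestrict x)).trans hmker

variable {N : ℕ} {Ω : Opens (Euc N)} {u v : Euc N → ℝ} {K : Set (Euc N)} {B : ℝ}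

variable (Ω) in
/-- The inclusion of smooth compactly supported fields into `C¹` ones. -/
def smoothInclusion : 𝓓(Ω, Euc N) →ₗ[ℝ] 𝓓^{1}(Ω, Euc N) where
  toFun z := ⟨z, z.contDiff.of_le (by simp), z.hasCompactSupport, z.tsupport_subset⟩
  map_add' _ _ := rfl
  map_smul' _ _ := rfl

theorem coe_smoothInclusion (z : 𝓓(Ω, Euc N)) : ⇑(smoothInclusion Ω z) = z := rfl

theorem integrableOn_mul_divg (hu : IntegrableOn u Ω) (z : 𝓓^{1}(Ω, Euc N)) :
    IntegrableOn (fun x => u x * divg z x) Ω := by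
  have hdivg : Continuous (divg z) := continuous_divg z.contDiff
  obtain ⟨A, hA⟩ :=
    hdivg.bounded_above_of_compact_support (hasCompactSupport_divg z.hasCompactSupport)
  exact hu.mul_bdd (c := A) hdivg.aestronglyMeasurable (ae_of_all _ hA)

theorem divg_testFunction_add (z w : 𝓓^{1}(Ω, Euc N)) (x : Euc N) :
    divg ⇑(z + w) x = divg z x + divg w x :=
  divg_add (z.contDiff.differentiable one_ne_zero x) (w.contDiff.differentiable one_ne_zero x)

theorem divg_testFunction_smul (a : ℝ) (z : 𝓓^{1}(Ω, Euc N)) (x : Euc N) :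
    divg ⇑(a • z) x = a * divg z x :=
  divg_const_smul a (z.contDiff.differentiable one_ne_zero x)

/-- The functional `z ↦ ∫ u div z` on `C¹` fields with compact support in `Ω`, that is, minus the
distributional gradient of `u`. -/
def divgPairing (hu : IntegrableOn u Ω) : 𝓓^{1}(Ω, Euc N) →ₗ[ℝ] ℝ where
  toFun z := ∫ x in Ω, u x * divg z x
  map_add' z w := by
    rw [← integral_add (integrableOn_mul_divg hu z) (integrableOn_mul_divg hu w)]
    simp only [divg_testFunction_add, mul_add]
  map_smul' a z := by
    simp only [divg_testFunction_smul, mul_left_comm (u _) a, integral_const_mul, smul_eq_mul,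
      RingHom.id_apply]

theorem setIntegral_mul_divg_le (hTV : TV Ω u ≠ ⊤) (z : 𝓓^{1}(Ω, Euc N)) :
    ∫ x in Ω, u x * divg z x ≤
      (TV Ω u).toReal * ‖TestFunction.toBoundedContinuousFunctionCLM ℝ z‖ := by
  set M := ‖TestFunction.toBoundedContinuousFunctionCLM ℝ z‖
  have hzM (x : Euc N) : ‖z x‖ ≤ M :=
    (TestFunction.toBoundedContinuousFunctionCLM ℝ z).norm_coe_le_norm x
  have hscale (M' : ℝ) (hM' : M < M') : ∫ x in Ω, u x * divg z x ≤ (TV Ω u).toReal * M' := by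
    have hM0 : 0 < M' := (norm_nonneg _).trans_lt hM'
    have h := ofReal_integral_le_TV (Ω := Ω) u (M'⁻¹ • z).contDiff (M'⁻¹ • z).hasCompactSupport
      (M'⁻¹ • z).tsupport_subset fun x => by
        rw [smul_apply, norm_smul, norm_inv, Real.norm_of_nonneg hM0.le, inv_mul_le_one₀ hM0]
        exact (hzM x).trans hM'.le
    simp only [divg_testFunction_smul, mul_left_comm (u _), integral_const_mul] at h
    rwa [ENNReal.ofReal_le_iff_le_toReal hTV, inv_mul_le_iff₀' hM0] at h
  exact ge_of_tendsto ((tendsto_id.const_mul _).mono_left nhdsWithin_le_nhds)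
    (eventually_nhdsWithin_of_forall (s := Ioi M) hscale)

theorem exists_divgPairing_extension (hu : IntegrableOn u Ω) (hTV : TV Ω (u + v) ≠ ⊤) :
    ∃ L : 𝓓^{1}(Ω, Euc N) →ₗ[ℝ] ℝ,
      (∀ z : 𝓓^{1}(Ω, Euc N), (∀ x ∈ tsupport v, divg z x = 0) → L z = divgPairing hu z) ∧
      ∀ z, L z ≤ (TV Ω (u + v)).toReal * ‖TestFunction.toBoundedContinuousFunctionCLM ℝ z‖ := by
  let p : Submodule ℝ 𝓓^{1}(Ω, Euc N) :=
    { carrier := {z | ∀ x ∈ tsupport v, divg z x = 0}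
      zero_mem' := fun x _ => divg_of_notMem_tsupport (by simp)
      add_mem' := fun hz hw x hx => by rw [divg_testFunction_add, hz x hx, hw x hx, add_zero]
      smul_mem' := fun a z hz x hx => by rw [divg_testFunction_smul, hz x hx, mul_zero] }
  obtain ⟨L, hLp, hL⟩ := exists_extension_of_le_sublinear ⟨p, divgPairing hu ∘ₗ p.subtype⟩
    (fun z => (TV Ω (u + v)).toReal * ‖TestFunction.toBoundedContinuousFunctionCLM ℝ z‖)
    (fun a ha z => by
      rw [map_smul, norm_smul, Real.norm_of_nonneg ha.le, mul_left_comm])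
    (fun z w => by
      rw [map_add, ← mul_add]
      gcongr
      exact norm_add_le _ _)
    fun ⟨z, hz⟩ => by
      refine (integral_congr_ae (ae_of_all _ fun x => ?_)).trans_le (setIntegral_mul_divg_le hTV z)
      by_cases hx : x ∈ tsupport v
      · simp [hz x hx]
      · simp [image_eq_zero_of_notMem_tsupport hx]
  exact ⟨L, fun z hz => hLp ⟨z, hz⟩, hL⟩

theorem exists_testFunction_divg_eqOn (hN : N ≠ 0) (hK : IsCompact K) (hKΩ : K ⊆ Ω) {p : ℝ≥0∞}
    (hp : N < p) (hp' : p ≠ ∞) :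
    ∃ S : Set (Euc N), IsCompact S ∧ S ⊆ Ω ∧ ∃ C : ℝ≥0, ∀ z : 𝓓(Ω, Euc N),
      ∃ y : 𝓓^{1}(Ω, Euc N), (∀ x ∈ K, divg y x = divg z x) ∧
        ∀ x, ‖y x‖ₑ ≤ C * eLpNorm (divg z) p (volume.restrict S) := by
  obtain ⟨χ, hχ, hχK⟩ := exists_testFunction_eq_one hK hKΩ
  have hχ1 : ContDiff ℝ 1 χ := χ.contDiff.of_le (by simp)
  have hχn (x : Euc N) : ‖χ x‖ₑ ≤ 1 := by
    rw [Real.enorm_of_nonneg (hχ x).1]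
    exact ENNReal.ofReal_le_one.2 (hχ x).2
  obtain ⟨C, hC⟩ := exists_divg_eq_enorm_le hN χ.hasCompactSupport.isCompact hp hp'
  refine ⟨tsupport χ, χ.hasCompactSupport.isCompact, χ.tsupport_subset, C, fun z => ?_⟩
  obtain ⟨w, hw, hdw, hwC⟩ := hC (fun x => χ x * divg z x)
    (hχ1.mul (contDiff_divg z.contDiff (WithTop.coe_le_coe.2 le_top)))
    fun x hx => by rw [image_eq_zero_of_notMem_tsupport hx, zero_mul]
  refine ⟨⟨fun x => χ x • w x, hχ1.smul hw, χ.hasCompactSupport.smul_right,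
    (tsupport_smul_subset_left _ _).trans χ.tsupport_subset⟩, fun x hx => ?_, fun x => ?_⟩
  · have hdχ : fderiv ℝ χ x = 0 := IsLocalMax.fderiv_eq_zero <| .of_forall fun y => by
      rw [hχK x hx]
      exact (hχ y).2
    have hxS : x ∈ tsupport χ := subset_tsupport _ (by simp [hχK x hx])
    change divg (fun x => χ x • w x) x = divg z x
    rw [divg_fun_smul (hχ1.differentiable one_ne_zero x) (hw.differentiable one_ne_zero x),
      hdw x hxS, hdχ, hχK x hx]
    simp
  · calc ‖χ x • w x‖ₑ ≤ ‖w x‖ₑ := by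
          rw [enorm_smul]
          exact mul_le_of_le_one_left' (hχn x)
      _ ≤ C * eLpNorm (fun x => χ x * divg z x) p volume := hwC x
      _ ≤ C * eLpNorm (divg z) p (volume.restrict (tsupport χ)) := by
          rw [← eLpNorm_indicator_eq_eLpNorm_restrict (isClosed_tsupport χ).measurableSet]
          gcongr
          refine eLpNorm_mono_enorm fun x => ?_
          by_cases hx : x ∈ tsupport χ
          · rw [indicator_of_mem hx, enorm_mul]
            exact mul_le_of_le_one_left' (hχn x)
          · simp [image_eq_zero_of_notMem_tsupport hx]

theorem memLp_divg {μ : Measure (Euc N)} [IsFiniteMeasureOnCompacts μ] (q : ℝ≥0∞)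
    (z : 𝓓^{1}(Ω, Euc N)) : MemLp (divg z) q μ :=
  (continuous_divg z.contDiff).memLp_of_hasCompactSupport
    (hasCompactSupport_divg z.hasCompactSupport)

variable (Ω) in
/-- The divergence as a linear operator into `L^q(μ)`. -/
def divgLp (q : ℝ≥0∞) (μ : Measure (Euc N)) [IsFiniteMeasureOnCompacts μ] :
    𝓓^{1}(Ω, Euc N) →ₗ[ℝ] Lp ℝ q μ where
  toFun z := (memLp_divg q z).toLp
  map_add' z w := by
    rw [← MemLp.toLp_add]
    exact MemLp.toLp_congr _ _ (ae_of_all _ (divg_testFunction_add z w))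
  map_smul' a z := by
    rw [RingHom.id_apply, ← MemLp.toLp_const_smul]
    exact MemLp.toLp_congr _ _ (ae_of_all _ (divg_testFunction_smul a z))

theorem exists_le_mul_norm_divgLp (hN : N ≠ 0) (hK : IsCompact K) (hKΩ : K ⊆ Ω)
    {q : ℝ≥0∞} (hNq : N < q) (hq : q ≠ ∞) (m : 𝓓^{1}(Ω, Euc N) →ₗ[ℝ] ℝ)
    (hmK : ∀ z : 𝓓^{1}(Ω, Euc N), (∀ x ∈ K, divg z x = 0) → m z = 0) (hB : 0 ≤ B)
    (hmB : ∀ z, m z ≤ B * ‖TestFunction.toBoundedContinuousFunctionCLM ℝ z‖) :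
    ∃ S : Set (Euc N), IsCompact S ∧ S ⊆ Ω ∧ ∃ C, ∀ z : 𝓓(Ω, Euc N),
      m (smoothInclusion Ω z) ≤ C * ‖divgLp Ω q (volume.restrict S) (smoothInclusion Ω z)‖ := by
  obtain ⟨S, hS, hSΩ, C, hC⟩ := exists_testFunction_divg_eqOn hN hK hKΩ hNq hq
  refine ⟨S, hS, hSΩ, B * C, fun z => ?_⟩
  obtain ⟨y, hyK, hyC⟩ := hC z
  have hmy : m (smoothInclusion Ω z) = m y := by
    rw [← sub_eq_zero, ← map_sub]
    refine hmK _ fun x hx => ?_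
    rw [sub_eq_add_neg, ← neg_one_smul ℝ y, divg_testFunction_add, divg_testFunction_smul,
      hyK x hx, coe_smoothInclusion]
    ring
  have hy : ‖TestFunction.toBoundedContinuousFunctionCLM ℝ y‖ ≤
      C * ‖divgLp Ω q (volume.restrict S) (smoothInclusion Ω z)‖ := by
    refine (BoundedContinuousFunction.norm_le
      (mul_nonneg C.coe_nonneg ENNReal.toReal_nonneg)).2 fun x => ?_
    have hz : MemLp (divg z) q (volume.restrict S) := memLp_divg q (smoothInclusion Ω z)
    calc ‖y x‖ = ‖y x‖ₑ.toReal := (toReal_enorm _).symm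
      _ ≤ (C * eLpNorm (divg z) q (volume.restrict S)).toReal :=
          ENNReal.toReal_mono (ENNReal.mul_ne_top ENNReal.coe_ne_top hz.2.ne) (hyC x)
      _ = C * ‖divgLp Ω q (volume.restrict S) (smoothInclusion Ω z)‖ := by
          rw [ENNReal.toReal_mul, ENNReal.coe_toReal]
          exact congrArg _ (Lp.norm_toLp _ hz).symm
  rw [hmy, mul_assoc]
  exact (hmB y).trans (mul_le_mul_of_nonneg_left hy hB)

theorem exists_density_of_forall_divg_eq_zero (hN : N ≠ 0) (hK : IsCompact K) (hKΩ : K ⊆ Ω)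
    (m : 𝓓^{1}(Ω, Euc N) →ₗ[ℝ] ℝ)
    (hmK : ∀ z : 𝓓^{1}(Ω, Euc N), (∀ x ∈ K, divg z x = 0) → m z = 0) (hB : 0 ≤ B)
    (hmB : ∀ z, m z ≤ B * ‖TestFunction.toBoundedContinuousFunctionCLM ℝ z‖) :
    ∃ (S : Set (Euc N)) (w : Euc N → ℝ), IsCompact S ∧ S ⊆ Ω ∧ Integrable w ∧ (∀ x ∉ S, w x = 0) ∧
      ∀ z : 𝓓(Ω, Euc N), m (smoothInclusion Ω z) = ∫ x in Ω, w x * divg z x := by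
  let q : ℝ≥0∞ := (N + 1 : ℕ)
  have hNq : N < q := Nat.cast_lt.2 N.lt_succ_self
  have hq : q ≠ ∞ := ENNReal.natCast_ne_top _
  have : Fact (1 ≤ q) := ⟨Nat.one_le_cast.2 N.succ_pos⟩
  obtain ⟨S, hS, hSΩ, C, hC⟩ := exists_le_mul_norm_divgLp hN hK hKΩ hNq hq m hmK hB hmB
  have : IsFiniteMeasure (volume.restrict S) := ⟨by simpa using hS.measure_lt_top⟩
  obtain ⟨l, hl⟩ := exists_continuousLinearMap_apply_eq (divgLp Ω q _ ∘ₗ smoothInclusion Ω)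
    (m ∘ₗ smoothInclusion Ω) hC
  obtain ⟨w, hw, hlw⟩ := exists_integrable_dual_eq_integral hq l
  refine ⟨S, S.indicator w, hS, hSΩ, (integrable_indicator_iff hS.measurableSet).2 hw,
    fun x hx => indicator_of_notMem hx w, fun z => ?_⟩
  have hdivg : Continuous (divg z) := continuous_divg (z.contDiff.of_le (by simp))
  calc m (smoothInclusion Ω z) = ∫ x in S, w x * divg z x :=
        (hl z).symm.trans <| hlw (divg z) (memLp_divg q (smoothInclusion Ω z)) hdivg.measurable <|
          hdivg.bounded_above_of_compact_support (hasCompactSupport_divg z.hasCompactSupport)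
    _ = ∫ x, S.indicator w x * divg z x := by
        rw [← integral_indicator hS.measurableSet]
        simp only [indicator_mul_left]
    _ = ∫ x in Ω, S.indicator w x * divg z x := (setIntegral_mul_divg z.tsupport_subset _).symm

theorem exists_integrable_hasSmoothVariationLE (hN : N ≠ 0) (hu : IntegrableOn u Ω)
    (huTV : TV Ω u ≠ ⊤) (hv : HasCompactSupport v) (hvΩ : tsupport v ⊆ Ω)
    (huvTV : TV Ω (u + v) ≠ ⊤) :
    ∃ (K : Set (Euc N)) (g : Euc N → ℝ), IsCompact K ∧ K ⊆ Ω ∧ IntegrableOn g Ω ∧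
      (∀ x ∉ K, u x = g x) ∧ HasSmoothVariationLE Ω g (TV Ω (u + v)).toReal := by
  obtain ⟨L, hLv, hL⟩ := exists_divgPairing_extension hu huvTV
  obtain ⟨S, w, hS, hSΩ, hw, hwS, hLw⟩ := exists_density_of_forall_divg_eq_zero hN hv hvΩ
    (L - divgPairing hu) (fun z hz => sub_eq_zero.2 (hLv z hz))
    (B := (TV Ω (u + v)).toReal + (TV Ω u).toReal) (by positivity) fun z => by
      have hneg := setIntegral_mul_divg_le huTV (-z)
      have hpair : divgPairing hu (-z) = - divgPairing hu z := map_neg _ z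
      rw [map_neg, norm_neg] at hneg
      rw [LinearMap.sub_apply, add_mul, sub_eq_add_neg, ← hpair]
      exact add_le_add (hL z) hneg
  refine ⟨S, u + w, hS, hSΩ, hu.add hw.integrableOn, fun x hx => by simp [hwS x hx],
    fun z hz => ?_⟩
  have hz1 : ‖TestFunction.toBoundedContinuousFunctionCLM ℝ (smoothInclusion Ω z)‖ ≤ 1 :=
    (BoundedContinuousFunction.norm_le zero_le_one).2 hz
  calc ∫ x in Ω, (u + w) x * divg z x
      = (∫ x in Ω, u x * divg z x) + ∫ x in Ω, w x * divg z x := by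
        simp only [Pi.add_apply, add_mul]
        exact integral_add (integrableOn_mul_divg hu (smoothInclusion Ω z))
          (integrableOn_mul_divg hw.integrableOn (smoothInclusion Ω z))
    _ = L (smoothInclusion Ω z) := by
        rw [← hLw z, LinearMap.sub_apply]
        exact add_sub_cancel (divgPairing hu (smoothInclusion Ω z)) (L (smoothInclusion Ω z))
    _ ≤ (TV Ω (u + v)).toReal * 1 := (hL _).trans (by gcongr)
    _ = (TV Ω (u + v)).toReal := mul_one _

end Multiplier

theorem TV_eq_zero_of_dim_zero (Ω : Set (Euc 0)) (u : Euc 0 → ℝ) : TV Ω u = 0 := by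
  simp [TV, divg]

theorem least_gradient_of_superlevel_sets {N : ℕ} (Ω : Set (Euc N)) (hΩ : IsOpen Ω)
    (u : Euc N → ℝ) (hu1 : IntegrableOn u Ω volume) (hu2 : TV Ω u ≠ ⊤)
    (h : ∀ᵐ t ∂(volume : Measure ℝ),
      IsLeastGradient Ω ({x | t < u x}.indicator (fun _ => (1:ℝ)))) :
    IsLeastGradient Ω u := by
  intro v hv hvΩ
  rcases eq_or_ne (TV Ω (u + v)) ⊤ with htop | huv
  · exact htop ▸ le_top
  rcases eq_or_ne N 0 with rfl | hN
  · simp [TV_eq_zero_of_dim_zero]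
  lift Ω to Opens (Euc N) using hΩ
  obtain ⟨K, g, hK, hKΩ, hg, hug, hgc⟩ :=
    exists_integrable_hasSmoothVariationLE hN hu1 hu2 hv hvΩ huv
  calc TV Ω u ≤ ENNReal.ofReal (TV Ω (u + v)).toReal :=
        TV_le_of_isLeastGradient_superlevel h hu1 hg hK hKΩ hug hgc
    _ = TV Ω (u + v) := ENNReal.ofReal_toReal huv
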